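/- Let ν ∈ ℂ with Re(ν) > −1, and let α, β ∈ ℂ with Re(√α) > Re(√β) > 0. Then Σ_{n=1}^∞ τ(n) I_{ν+1}(π√n(√α−√β)) K_{ν+1}(π√n(√α+√β)) = (2(2π)^{−12} Γ(ν+13)/Γ(ν+2)) Σ_{n=1}^∞ [ τ(n)/(√(4n+α)√(4n+β)) · ((√(4n+α)−√(4n+β))/(√(4n+α)+√(4n+β)))^{ν+1} · (1/√(4n+α) + 1/√(4n+β))^{22} · ₂F₁(ν−10, −11; ν+2; ((√(4n+α)−√(4n+β))/(√(4n+α)+√(4n+β)))²) ]. -/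

import Mathlib

open scoped Real

noncomputable def besselK (ν z : ℂ) : ℂ :=
  ∫ t in Set.Ioi (0:ℝ), Complex.exp (-z * Real.cosh t) * Complex.cosh (ν * t)

noncomputable def besselI (ν z : ℂ) : ℂ :=
  ∑' m : ℕ, (z / 2) ^ (ν + 2 * (m : ℂ)) / ((m.factorial : ℂ) * Complex.Gamma (ν + m + 1))

/-- Principal branch complex square root. -/
noncomputable def csqrt (z : ℂ) : ℂ := z ^ ((1 : ℂ)/2)

/-- Gauss hypergeometric series ₂F₁(a,b;c;z). -/
noncomputable def hyp2F1 (a b c z : ℂ) : ℂ :=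
  ∑' m : ℕ, ((ascPochhammer ℂ m).eval a * (ascPochhammer ℂ m).eval b) /
    ((ascPochhammer ℂ m).eval c * (m.factorial : ℂ)) * z ^ m

/-- `IsRamanujanTau τ` states that `τ` (indexed by `n ≥ 1`) satisfies the defining product
expansion `q ∏ (1 - q^m)^24 = ∑ τ(n) q^n` for `|q| < 1`. -/
def IsRamanujanTau (τ : ℕ → ℂ) : Prop :=
  ∀ q : ℂ, ‖q‖ < 1 → ∑' n : ℕ, τ (n + 1) * q ^ (n + 1) = q * ∏' m : ℕ, (1 - q ^ (m + 1)) ^ 24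

open UpperHalfPlane in
theorem IsRamanujanTau.hasSum_discriminant {τ : ℕ → ℂ} (hτ : IsRamanujanTau τ) (z : ℍ) :
    HasSum (fun n : ℕ => τ (n + 1) * Function.Periodic.qParam 1 (z : ℂ) ^ (n + 1))
      (ModularForm.discriminant z) := by
  set q := Function.Periodic.qParam 1 (z : ℂ) with hq
  have hq1 : ‖q‖ < 1 := Function.Periodic.norm_qParam_lt_one one_pos z.im_pos
  have h := hτ q hq1
  have hD : q * ∏' m : ℕ, (1 - q ^ (m + 1)) ^ 24 = ModularForm.discriminant z := by
    rw [ModularForm.discriminant_eq_q_prod]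
  rw [hD] at h
  have hs : Summable (fun n : ℕ => τ (n + 1) * q ^ (n + 1)) := by
    by_contra hc
    rw [tsum_eq_zero_of_not_summable hc] at h
    exact ModularForm.discriminant_ne_zero z h.symm
  rw [← h]
  exact hs.hasSum

open UpperHalfPlane MatrixGroups in
theorem IsRamanujanTau.exists_norm_le {τ : ℕ → ℂ} (hτ : IsRamanujanTau τ) :
    ∃ C : ℝ, 0 < C ∧ ∀ n : ℕ, ‖τ (n + 1)‖ ≤ C * ((n : ℝ) + 1) ^ 6 := by
  let c : ℕ → ℂ := fun n => if n = 0 then 0 else τ n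
  have hc : ∀ n, c n = (qExpansion 1 CuspForm.discriminant).coeff n := by
    apply ModularFormClass.qExpansion_coeff_unique (Γ := 𝒮ℒ) (k := 12) one_pos
      one_mem_strictPeriods_SL
    intro z
    rw [← hasSum_nat_add_iff' 1]
    simpa [c] using hτ.hasSum_discriminant z
  have hO := CuspFormClass.qExpansion_isBigO (Γ := 𝒮ℒ) (k := 12) CuspForm.discriminant
  rw [Subgroup.strictWidthInfty_SL2Z] at hO
  obtain ⟨C, hC, h⟩ := Asymptotics.bound_of_isBigO_nat_atTop hO
  refine ⟨C, hC, fun n => ?_⟩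
  have h1 := @h (n + 1) (by positivity)
  rw [← hc] at h1
  have h2 : ((((n + 1 : ℕ) : ℝ)) ^ (((12 : ℤ) : ℝ) / 2)) = ((n : ℝ) + 1) ^ 6 := by
    rw [show (((12 : ℤ) : ℝ) / 2) = ((6 : ℕ) : ℝ) by norm_num, Real.rpow_natCast]
    push_cast; rfl
  rw [h2, Real.norm_of_nonneg (by positivity)] at h1
  simpa [c] using h1

theorem IsRamanujanTau.tsum_exp_inv {τ : ℕ → ℂ} (hτ : IsRamanujanTau τ) {v : ℝ} (hv : 0 < v) :
    ∑' n : ℕ, τ (n + 1) * Complex.exp (-((n + 1 : ℝ) * (π ^ 2 / (2 * v)) : ℝ)) =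
      ((4 * v / π : ℝ) : ℂ) ^ 12 *
        ∑' n : ℕ, τ (n + 1) * Complex.exp (-(8 * (n + 1 : ℝ) * v : ℝ)) := by
  have hy : 0 < 4 * v / π := by positivity
  let z : UpperHalfPlane := ⟨Complex.I * (4 * v / π : ℝ), by simpa using hy⟩
  have hz : (z : ℂ) = Complex.I * (4 * v / π : ℝ) := rfl
  have h := congrFun ModularForm.discriminant_S_invariant z
  have h2 : ModularForm.discriminant (ModularGroup.S • z) =
     (z : ℂ) ^ 12 * ModularForm.discriminant z := by
    rw [ModularForm.SL_slash_apply, ModularGroup.denom_S, zpow_neg,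
      mul_inv_eq_iff_eq_mul₀ (zpow_ne_zero _ (UpperHalfPlane.ne_zero z))] at h
    rw [h, mul_comm]
    norm_cast
  rw [← (hτ.hasSum_discriminant _).tsum_eq, ← (hτ.hasSum_discriminant _).tsum_eq,
    UpperHalfPlane.modular_S_smul] at h2
  have hI : (Complex.I) ^ 12 = 1 := by
    rw [show 12 = 4 * 3 by norm_num, pow_mul, Complex.I_pow_four, one_pow]
  simp only [hz, mul_pow, hI, one_mul] at h2
  have hv' : (v : ℂ) ≠ 0 := by exact_mod_cast hv.ne'
  have hπ : (π : ℂ) ≠ 0 := by exact_mod_cast Real.pi_ne_zero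
  convert h2 using 3 with n
  · congr 1
    rw [Function.Periodic.qParam, ← Complex.exp_nat_mul]
    congr 1
    push_cast
    field_simp
    ring
  · ext n
    congr 1
    rw [Function.Periodic.qParam, ← Complex.exp_nat_mul]
    congr 1
    push_cast
    field_simp
    linear_combination (-8 : ℂ) * Complex.I_sq

theorem Complex.factorial_mul_norm_Gamma_le {μ : ℂ} (hμ : 0 < μ.re) (m : ℕ) :
    (m.factorial : ℝ) * ‖Complex.Gamma (μ + 1)‖ ≤ ‖Complex.Gamma (μ + m + 1)‖ := by
  induction m with
  | zero => simp
  | succ k ih =>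
    have h0 : μ + k + 1 ≠ 0 := by
      intro h
      have := congrArg Complex.re h
      simp at this
      have : (0 : ℝ) ≤ k := by positivity
      linarith
    have h1 : Complex.Gamma (μ + (k + 1 : ℕ) + 1) = (μ + k + 1) * Complex.Gamma (μ + k + 1) := by
      rw [← Complex.Gamma_add_one _ h0]; push_cast; ring_nf
    rw [h1, norm_mul, Nat.factorial_succ]
    push_cast
    have h2 : (k : ℝ) + 1 ≤ ‖μ + k + 1‖ := by
      refine le_trans ?_ (Complex.re_le_norm _)
      simp
      linarith
    calc ((k : ℝ) + 1) * k.factorial * ‖Complex.Gamma (μ + 1)‖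
        = ((k : ℝ) + 1) * (k.factorial * ‖Complex.Gamma (μ + 1)‖) := by ring
      _ ≤ _ := mul_le_mul h2 ih (by positivity) (by positivity)

theorem Complex.Gamma_add_one_ne_zero {μ : ℂ} (hμ : 0 < μ.re) (m : ℕ) :
    Complex.Gamma (μ + m + 1) ≠ 0 := by
  apply Complex.Gamma_ne_zero_of_re_pos
  simp
  positivity

theorem Complex.norm_inv_Gamma_le {μ : ℂ} (hμ : 0 < μ.re) (m : ℕ) :
    ‖Complex.Gamma (μ + m + 1)‖⁻¹ ≤ ‖Complex.Gamma (μ + 1)‖⁻¹ / m.factorial := by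
  have h := Complex.factorial_mul_norm_Gamma_le hμ m
  have h0 : 0 < ‖Complex.Gamma (μ + 1)‖ := by
    have := Complex.Gamma_add_one_ne_zero hμ 0
    simpa using this
  have hm : (0 : ℝ) < m.factorial := by positivity
  rw [div_eq_mul_inv, ← mul_inv]
  apply inv_anti₀ (by positivity)
  linarith

theorem sq_pow_div_factorial_le {y : ℝ} (hy : 0 ≤ y) (m : ℕ) :
    y ^ (2 * m) / (m.factorial * m.factorial) ≤ (2 * y) ^ (2 * m) / (2 * m).factorial := by
  rw [div_le_div_iff₀ (by positivity) (by positivity), mul_pow]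
  have h : ((2 * m).factorial : ℝ) ≤ 2 ^ (2 * m) * (m.factorial * m.factorial) := by
    have h1 : (2 * m).choose m * m.factorial * m.factorial = (2 * m).factorial := by
      have := Nat.choose_mul_factorial_mul_factorial (show m ≤ 2 * m by omega)
      rwa [show 2 * m - m = m by omega] at this
    have h2 := Nat.choose_le_two_pow (2 * m) m
    rw [← h1]
    push_cast
    have h3 : (((2 * m).choose m : ℕ) : ℝ) ≤ 2 ^ (2 * m) := by exact_mod_cast h2
    rw [mul_assoc]
    gcongr
  nlinarith [pow_nonneg hy (2 * m)]

/-- The entire factor of the Bessel function `besselI`. -/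
noncomputable def besselISeries (μ z : ℂ) : ℂ :=
  ∑' m : ℕ, (z / 2) ^ (2 * m) / ((m.factorial : ℂ) * Complex.Gamma (μ + m + 1))

theorem norm_besselISeries_term_le {μ : ℂ} (hμ : 0 < μ.re) {z : ℂ} {r : ℝ} (hz : ‖z‖ ≤ r) (m : ℕ) :
    ‖(z / 2) ^ (2 * m) / ((m.factorial : ℂ) * Complex.Gamma (μ + m + 1))‖ ≤
      ‖Complex.Gamma (μ + 1)‖⁻¹ * (r ^ (2 * m) / (2 * m).factorial) := by
  have hr : 0 ≤ r := (norm_nonneg z).trans hz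
  have h := sq_pow_div_factorial_le (y := r / 2) (by positivity) m
  rw [show 2 * (r / 2) = r by ring] at h
  rw [norm_div, norm_pow, norm_mul, norm_div, Complex.norm_natCast, Complex.norm_ofNat,
    div_eq_mul_inv, mul_inv]
  calc (‖z‖ / 2) ^ (2 * m) * ((m.factorial : ℝ)⁻¹ * ‖Complex.Gamma (μ + m + 1)‖⁻¹)
      ≤ (r / 2) ^ (2 * m) * ((m.factorial : ℝ)⁻¹ * (‖Complex.Gamma (μ + 1)‖⁻¹ / m.factorial)) := by
        gcongr
        exact Complex.norm_inv_Gamma_le hμ m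
    _ = ‖Complex.Gamma (μ + 1)‖⁻¹ * ((r / 2) ^ (2 * m) / (m.factorial * m.factorial)) := by
        field_simp
    _ ≤ _ := by gcongr

theorem summable_besselISeries {μ : ℂ} (hμ : 0 < μ.re) (z : ℂ) :
    Summable fun m : ℕ => (z / 2) ^ (2 * m) / ((m.factorial : ℂ) * Complex.Gamma (μ + m + 1)) :=
  .of_norm_bounded ((Real.hasSum_cosh ‖z‖).summable.mul_left _)
    (norm_besselISeries_term_le hμ le_rfl)

theorem differentiable_besselISeries {μ : ℂ} (hμ : 0 < μ.re) :
    Differentiable ℂ (besselISeries μ) := by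
  intro z
  have h : DifferentiableOn ℂ (besselISeries μ) (Metric.ball 0 (‖z‖ + 1)) := by
    apply Complex.differentiableOn_tsum_of_summable_norm (u := fun m : ℕ =>
      ‖Complex.Gamma (μ + 1)‖⁻¹ * ((‖z‖ + 1) ^ (2 * m) / (2 * m).factorial))
    · exact (Real.hasSum_cosh _).summable.mul_left _
    · intro m
      fun_prop
    · exact Metric.isOpen_ball
    · intro m x hx
      apply norm_besselISeries_term_le hμ
      simpa using (mem_ball_zero_iff.mp hx).le
  exact h.differentiableAt (Metric.isOpen_ball.mem_nhds (by simp))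

theorem besselI_eq_mul_series (μ : ℂ) {z : ℂ} (hz : z ≠ 0) :
    besselI μ z = (z / 2) ^ μ * besselISeries μ z := by
  rw [besselI, besselISeries, ← tsum_mul_left]
  congr 1
  ext m
  rw [Complex.cpow_add _ _ (by simpa using hz), mul_div_assoc]
  congr 2
  rw [show (2 * (m : ℂ)) = ((2 * m : ℕ) : ℂ) by push_cast; rfl, Complex.cpow_natCast]

theorem betaIntegral_coeff {μ : ℂ} (hμ : 0 < μ.re) (m : ℕ) :
    (√π : ℂ)⁻¹ * (Complex.Gamma (μ + 1 / 2))⁻¹ * Complex.betaIntegral (m + 1 / 2) (μ + 1 / 2) /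
        ((2 * m).factorial : ℂ) =
      1 / (4 ^ m * ((m.factorial : ℂ) * Complex.Gamma (μ + m + 1))) := by
  have h1 := Complex.Gamma_mul_Gamma_eq_betaIntegral (s := m + 1 / 2) (t := μ + 1 / 2)
    (by simp; positivity) (by simp; linarith)
  have h2 : Complex.Gamma (m + 1 / 2) = ((2 * m).factorial : ℂ) * √π / (4 ^ m * m.factorial) := by
    have h := Complex.Gamma_mul_Gamma_add_half ((m : ℂ) + 1 / 2)
    have e : (m : ℂ) + 1 / 2 + 1 / 2 = m + 1 := by ring
    rw [e, Complex.Gamma_nat_eq_factorial, show 2 * ((m : ℂ) + 1 / 2) = ((2 * m : ℕ) : ℂ) + 1 by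
      push_cast; ring, Complex.Gamma_nat_eq_factorial] at h
    have e2 : (2 : ℂ) ^ (1 - (((2 * m : ℕ) : ℂ) + 1)) = (4 ^ m)⁻¹ := by
      rw [show (1 - (((2 * m : ℕ) : ℂ) + 1)) = -((2 * m : ℕ) : ℂ) by ring, Complex.cpow_neg,
        Complex.cpow_natCast, pow_mul]; norm_num
    rw [e2] at h
    have : (m.factorial : ℂ) ≠ 0 := by exact_mod_cast m.factorial_ne_zero
    field_simp at h ⊢
    linear_combination h
  have e3 : (m : ℂ) + 1 / 2 + (μ + 1 / 2) = μ + m + 1 := by ring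
  rw [e3] at h1
  have hG : Complex.Gamma (μ + 1 / 2) ≠ 0 :=
    Complex.Gamma_ne_zero_of_re_pos (by simp; linarith)
  have hG2 := Complex.Gamma_add_one_ne_zero hμ m
  have hp : (√π : ℂ) ≠ 0 := by
    exact_mod_cast (Real.sqrt_pos.mpr Real.pi_pos).ne'
  have hf : (m.factorial : ℂ) ≠ 0 := by exact_mod_cast m.factorial_ne_zero
  have hf2 : ((2 * m).factorial : ℂ) ≠ 0 := by exact_mod_cast (2 * m).factorial_ne_zero
  rw [h2] at h1
  generalize Complex.betaIntegral (m + 1 / 2) (μ + 1 / 2) = B at *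
  generalize Complex.Gamma (μ + 1 / 2) = G at *
  field_simp at h1 ⊢
  linear_combination -h1

theorem Complex.norm_cosh_le (z : ℂ) : ‖Complex.cosh z‖ ≤ Real.exp |z.re| := by
  rw [Complex.cosh, norm_div, Complex.norm_ofNat, div_le_iff₀ (by norm_num)]
  refine (norm_add_le _ _).trans ?_
  rw [Complex.norm_exp, Complex.norm_exp, Complex.neg_re]
  have h1 := Real.exp_le_exp.mpr (le_abs_self z.re)
  have h2 := Real.exp_le_exp.mpr (neg_le_abs z.re)
  linarith

theorem Complex.norm_cpow_le_of_ne_zero {z : ℂ} (hz : z ≠ 0) (μ : ℂ) :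
    ‖z ^ μ‖ ≤ Real.exp (π * |μ.im|) * ‖z‖ ^ μ.re := by
  rw [Complex.norm_cpow_of_ne_zero hz, div_eq_mul_inv, mul_comm, ← Real.exp_neg]
  gcongr
  calc -(z.arg * μ.im) ≤ |z.arg * μ.im| := neg_le_abs _
    _ = |z.arg| * |μ.im| := abs_mul _ _
    _ ≤ _ := by gcongr; exact Complex.abs_arg_le_pi z

theorem exists_norm_besselISeries_le {μ : ℂ} (hμ : 0 < μ.re) :
    ∃ C : ℝ, 0 ≤ C ∧ ∀ z : ℂ, ‖besselISeries μ z‖ ≤ C * Real.exp |z.re| := by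
  let f : ℝ → ℂ := fun x => (x : ℂ) ^ ((1 / 2 : ℂ) - 1) * (1 - (x : ℂ)) ^ (μ + 1 / 2 - 1)
  have hf : IntervalIntegrable f MeasureTheory.volume 0 1 :=
    Complex.betaIntegral_convergent (by norm_num) (by simp; linarith)
  let κ : ℂ := (√π : ℂ)⁻¹ * (Complex.Gamma (μ + 1 / 2))⁻¹
  refine ⟨‖κ‖ * ∫ x in (0:ℝ)..1, ‖f x‖, mul_nonneg (norm_nonneg _)
    (intervalIntegral.integral_nonneg (by norm_num) fun _ _ => norm_nonneg _), fun z => ?_⟩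
  have key : HasSum (fun m : ℕ => ∫ x in (0:ℝ)..1, (z ^ (2 * m) / (2 * m).factorial) *
      ((x : ℂ) ^ m * f x)) (∫ x in (0:ℝ)..1, Complex.cosh (z * √x) * f x) := by
    apply intervalIntegral.hasSum_integral_of_dominated_convergence
      (fun (m : ℕ) (x : ℝ) => (‖z‖ ^ (2 * m) / (2 * m).factorial) * ‖f x‖)
    · intro m
      have h1 := (intervalIntegrable_iff.mp hf).aestronglyMeasurable
      have h2 : Continuous fun x : ℝ => (x : ℂ) ^ m := by fun_prop
      exact (h2.aestronglyMeasurable.mul h1).const_mul _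
    · intro m
      refine .of_forall fun x hx => ?_
      rw [Set.uIoc_of_le zero_le_one] at hx
      rw [norm_mul, norm_mul, norm_div, norm_pow, norm_pow, Complex.norm_natCast,
        Complex.norm_real, Real.norm_of_nonneg hx.1.le]
      gcongr
      exact mul_le_of_le_one_left (norm_nonneg _) (pow_le_one₀ hx.1.le hx.2)
    · exact .of_forall fun x hx => (Real.hasSum_cosh ‖z‖).summable.mul_right _
    · simp_rw [tsum_mul_right]
      exact hf.norm.const_mul _
    · refine .of_forall fun x hx => ?_
      rw [Set.uIoc_of_le zero_le_one] at hx
      have h := (Complex.hasSum_cosh (z * √x)).mul_right (f x)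
      convert! h using 2 with m
      rw [mul_pow, pow_mul (√x : ℂ), ← Complex.ofReal_pow √x, Real.sq_sqrt hx.1.le]
      ring
  have hcoef : ∀ m : ℕ, κ * ∫ x in (0:ℝ)..1, (z ^ (2 * m) / (2 * m).factorial) *
      ((x : ℂ) ^ m * f x) = (z / 2) ^ (2 * m) / ((m.factorial : ℂ) * Complex.Gamma (μ + m + 1)) := by
    intro m
    have hB : ∫ x in (0:ℝ)..1, ((x : ℂ) ^ m * f x) =
        Complex.betaIntegral (m + 1 / 2) (μ + 1 / 2) := by
      rw [Complex.betaIntegral]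
      apply intervalIntegral.integral_congr_ae
      refine .of_forall fun x hx => ?_
      rw [Set.uIoc_of_le zero_le_one] at hx
      have hx0 : (x : ℂ) ≠ 0 := by exact_mod_cast hx.1.ne'
      simp only [f]
      rw [← mul_assoc, ← Complex.cpow_natCast, ← Complex.cpow_add _ _ hx0]
      ring_nf
    rw [intervalIntegral.integral_const_mul, hB]
    have := betaIntegral_coeff hμ m
    calc κ * (z ^ (2 * m) / ((2 * m).factorial : ℂ) * Complex.betaIntegral (m + 1 / 2) (μ + 1 / 2))
        = z ^ (2 * m) * (κ * Complex.betaIntegral (m + 1 / 2) (μ + 1 / 2) /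
          ((2 * m).factorial : ℂ)) := by ring
      _ = _ := by
        rw [this, div_pow, pow_mul 2]
        norm_num
        ring
  have h2 := key.mul_left κ
  simp_rw [hcoef] at h2
  rw [besselISeries, h2.tsum_eq, norm_mul, mul_assoc]
  gcongr
  refine (intervalIntegral.norm_integral_le_integral_norm zero_le_one).trans ?_
  rw [← intervalIntegral.integral_mul_const]
  apply intervalIntegral.integral_mono_on zero_le_one
  · apply IntervalIntegrable.norm
    apply hf.continuousOn_mul
    fun_prop
  · exact hf.norm.mul_const _
  · intro x hx
    rw [norm_mul, mul_comm]
    gcongr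
    refine (Complex.norm_cosh_le _).trans ?_
    rw [Complex.re_mul_ofReal, abs_mul, abs_of_nonneg (Real.sqrt_nonneg x)]
    gcongr
    exact mul_le_of_le_one_right (abs_nonneg _) (Real.sqrt_le_one.mpr hx.2)

theorem exists_norm_besselI_le {μ : ℂ} (hμ : 0 < μ.re) :
    ∃ C : ℝ, 0 ≤ C ∧ ∀ z : ℂ, 0 < z.re → ‖besselI μ z‖ ≤ C * ‖z‖ ^ μ.re * Real.exp z.re := by
  obtain ⟨C, hC, h⟩ := exists_norm_besselISeries_le hμ
  refine ⟨Real.exp (π * |μ.im|) * C, by positivity, fun z hz => ?_⟩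
  have hz0 : z ≠ 0 := by rintro rfl; simp at hz
  rw [besselI_eq_mul_series μ hz0, norm_mul]
  have h1 := Complex.norm_cpow_le_of_ne_zero (div_ne_zero hz0 two_ne_zero) μ
  have h2 := h z
  rw [abs_of_pos hz] at h2
  calc _ ≤ (Real.exp (π * |μ.im|) * ‖z / 2‖ ^ μ.re) * (C * Real.exp z.re) := by gcongr
    _ ≤ (Real.exp (π * |μ.im|) * ‖z‖ ^ μ.re) * (C * Real.exp z.re) := by
      gcongr
      rw [norm_div, Complex.norm_ofNat]
      exact half_le_self (norm_nonneg z)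
    _ = _ := by ring

theorem differentiableAt_besselI {μ : ℂ} (hμ : 0 < μ.re) {z : ℂ} (hz : 0 < z.re) :
    DifferentiableAt ℂ (besselI μ) z := by
  have h : DifferentiableAt ℂ (fun z => (z / 2) ^ μ * besselISeries μ z) z := by
    refine DifferentiableAt.mul ?_ (differentiable_besselISeries hμ z)
    refine DifferentiableAt.cpow (by fun_prop) (by fun_prop) ?_
    left
    simpa using hz
  refine h.congr_of_eventuallyEq ?_
  have : {0}ᶜ ∈ nhds z := isOpen_compl_singleton.mem_nhds (by rintro rfl; simp at hz)
  filter_upwards [this] with x hx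
  exact besselI_eq_mul_series μ hx

theorem Real.one_add_sq_div_two_le_cosh (t : ℝ) : 1 + t ^ 2 / 2 ≤ Real.cosh t := by
  have key : ∀ s : ℝ, 0 ≤ s → 1 + s ^ 2 / 2 ≤ Real.cosh s := by
    intro s hs
    have h1 : Real.cosh s = 1 + 2 * Real.sinh (s / 2) ^ 2 := by
      have := Real.cosh_two_mul (s / 2)
      rw [show 2 * (s / 2) = s by ring, Real.cosh_sq] at this
      linarith
    have h2 : s / 2 ≤ Real.sinh (s / 2) := Real.self_le_sinh_iff.mpr (by positivity)
    nlinarith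
  rw [← Real.cosh_abs, ← sq_abs]
  exact key _ (abs_nonneg t)

theorem exp_neg_mul_cosh_mul_exp_le {δ x : ℝ} (hδ : 0 < δ) (hx : δ ≤ x) (c t : ℝ) :
    Real.exp (-x * Real.cosh t) * Real.exp (c * t) ≤
      Real.exp (-x) * (Real.exp (c ^ 2 / δ) * Real.exp (-(δ / 4) * t ^ 2)) := by
  rw [← Real.exp_add, ← Real.exp_add, ← Real.exp_add]
  apply Real.exp_le_exp.mpr
  have h1 := Real.one_add_sq_div_two_le_cosh t
  have h2 : c * t ≤ c ^ 2 / δ + δ / 4 * t ^ 2 := by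
    have : c ^ 2 / δ + δ / 4 * t ^ 2 - c * t = (c - δ / 2 * t) ^ 2 / δ := by
      field_simp
      ring
    have : 0 ≤ (c - δ / 2 * t) ^ 2 / δ := by positivity
    linarith
  have h3 : x * (1 + t ^ 2 / 2) ≤ x * Real.cosh t :=
    mul_le_mul_of_nonneg_left h1 (hδ.le.trans hx)
  have h4 : δ * t ^ 2 ≤ x * t ^ 2 := by gcongr
  linarith

theorem integrable_gaussian_bound {δ : ℝ} (hδ : 0 < δ) (a b : ℝ) (s : Set ℝ) :
    MeasureTheory.IntegrableOn
      (fun t : ℝ => a * (b * Real.exp (-(δ / 4) * t ^ 2))) s :=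
  (((integrable_exp_neg_mul_sq (by positivity : 0 < δ / 4)).const_mul b).const_mul a).integrableOn

theorem norm_besselK_integrand_le {ν z : ℂ} {t : ℝ} (ht : 0 ≤ t) :
    ‖Complex.exp (-z * Real.cosh t) * Complex.cosh (ν * t)‖ ≤
      Real.exp (-z.re * Real.cosh t) * Real.exp (|ν.re| * t) := by
  rw [norm_mul, Complex.norm_exp, Complex.re_mul_ofReal, Complex.neg_re]
  gcongr
  refine (Complex.norm_cosh_le _).trans ?_
  rw [Complex.re_mul_ofReal, abs_mul, abs_of_nonneg ht]

theorem exists_norm_besselK_le (ν : ℂ) {δ : ℝ} (hδ : 0 < δ) :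
    ∃ C : ℝ, 0 ≤ C ∧ ∀ z : ℂ, δ ≤ z.re → ‖besselK ν z‖ ≤ C * Real.exp (-z.re) := by
  refine ⟨∫ t in Set.Ioi (0:ℝ), 1 * (Real.exp (|ν.re| ^ 2 / δ) * Real.exp (-(δ / 4) * t ^ 2)),
    MeasureTheory.integral_nonneg fun t => by positivity, fun z hz => ?_⟩
  rw [mul_comm, ← MeasureTheory.integral_const_mul, besselK]
  apply MeasureTheory.norm_integral_le_of_norm_le
  · exact (integrable_gaussian_bound hδ _ _ _).const_mul _
  · rw [MeasureTheory.ae_restrict_iff' measurableSet_Ioi]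
    refine .of_forall fun t ht => ?_
    rw [one_mul]
    exact (norm_besselK_integrand_le (le_of_lt ht)).trans
      (exp_neg_mul_cosh_mul_exp_le hδ hz _ _)

theorem differentiableAt_besselK (ν : ℂ) {z : ℂ} (hz : 0 < z.re) :
    DifferentiableAt ℂ (besselK ν) z := by
  have hδ : 0 < z.re / 2 := by positivity
  have hs : {x : ℂ | z.re / 2 < x.re} ∈ nhds z :=
    (isOpen_lt continuous_const Complex.continuous_re).mem_nhds (by simp; linarith)
  have hcont : ∀ x : ℂ, Continuous fun t : ℝ =>
      Complex.exp (-x * Real.cosh t) * Complex.cosh (ν * t) := by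
    intro x
    have : Continuous fun t : ℝ => Complex.cosh (ν * t) :=
      Complex.continuous_cosh.comp (by fun_prop)
    fun_prop
  refine (hasDerivAt_integral_of_dominated_loc_of_deriv_le
    (F := fun (x : ℂ) (t : ℝ) => Complex.exp (-x * Real.cosh t) * Complex.cosh (ν * t))
    (F' := fun (x : ℂ) (t : ℝ) =>
      -(Real.cosh t : ℂ) * (Complex.exp (-x * Real.cosh t) * Complex.cosh (ν * t)))
    (bound := fun t => 1 * (Real.exp ((|ν.re| + 1) ^ 2 / (z.re / 2)) *
      Real.exp (-((z.re / 2) / 4) * t ^ 2)))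
    hs ?_ ?_ ?_ ?_ ?_ ?_).2.differentiableAt
  · exact .of_forall fun x => (hcont x).aestronglyMeasurable
  · refine MeasureTheory.Integrable.mono' (integrable_gaussian_bound hδ (Real.exp (-z.re))
      (Real.exp (|ν.re| ^ 2 / (z.re / 2))) _) (hcont z).aestronglyMeasurable ?_
    rw [MeasureTheory.ae_restrict_iff' measurableSet_Ioi]
    exact .of_forall fun t ht => (norm_besselK_integrand_le (le_of_lt ht)).trans
      (exp_neg_mul_cosh_mul_exp_le hδ (by linarith) _ _)
  · have : Continuous fun t : ℝ => -(Real.cosh t : ℂ) :=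
      (Complex.continuous_ofReal.comp Real.continuous_cosh).neg
    exact (this.mul (hcont z)).aestronglyMeasurable
  · rw [MeasureTheory.ae_restrict_iff' measurableSet_Ioi]
    refine .of_forall fun t ht x hx => ?_
    have ht : 0 ≤ t := le_of_lt ht
    have h1 : Real.cosh t ≤ Real.exp t := by
      rw [Real.cosh_eq]
      have := Real.exp_le_exp.mpr (show -t ≤ t by linarith)
      linarith
    rw [norm_mul, norm_neg, Complex.norm_real, Real.norm_of_nonneg (Real.cosh_pos t).le]
    calc _ ≤ Real.exp t * (Real.exp (-x.re * Real.cosh t) * Real.exp (|ν.re| * t)) := by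
          gcongr
          exact norm_besselK_integrand_le ht
      _ = Real.exp (-x.re * Real.cosh t) * Real.exp ((|ν.re| + 1) * t) := by
          rw [add_mul, Real.exp_add, one_mul]
          ring
      _ ≤ _ := (exp_neg_mul_cosh_mul_exp_le hδ (le_of_lt hx) _ _)
      _ ≤ _ := by
          gcongr
          rw [← Real.exp_zero]
          apply Real.exp_le_exp.mpr
          have : z.re / 2 < x.re := hx
          linarith
  · exact integrable_gaussian_bound hδ _ _ _
  · refine .of_forall fun t x hx => ?_
    have h1 : HasDerivAt (fun x : ℂ => -x * (Real.cosh t : ℂ)) (-(Real.cosh t : ℂ)) x := by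
      simpa using (hasDerivAt_neg x).mul_const (Real.cosh t : ℂ)
    convert! (h1.cexp.mul_const (Complex.cosh (ν * t))) using 1
    ring

theorem integral_comp_exp (g : ℝ → ℂ) :
    ∫ u in Set.Ioi (0:ℝ), g u = ∫ t : ℝ, (Real.exp t : ℂ) * g (Real.exp t) := by
  have h := MeasureTheory.integral_image_eq_integral_abs_deriv_smul (s := Set.univ)
    MeasurableSet.univ (fun x _ => (Real.hasDerivAt_exp x).hasDerivWithinAt)
    Real.exp_injective.injOn g
  rw [Set.image_univ, Real.range_exp] at h
  rw [h, MeasureTheory.setIntegral_univ]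
  congr 1
  ext t
  rw [abs_of_pos (Real.exp_pos t), Complex.real_smul]

theorem integrable_exp_neg_mul_cosh_mul_exp (ν : ℂ) {W : ℝ} (hW : 0 < W) :
    MeasureTheory.Integrable
      (fun t : ℝ => Complex.exp (-W * Real.cosh t) * Complex.exp (ν * t)) := by
  have hc : Continuous (fun t : ℝ => Complex.exp (-W * Real.cosh t) * Complex.exp (ν * t)) := by
    have : Continuous fun t : ℝ => (Real.cosh t : ℂ) :=
      Complex.continuous_ofReal.comp Real.continuous_cosh
    fun_prop
  refine MeasureTheory.Integrable.mono' (MeasureTheory.integrableOn_univ.mp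
    (integrable_gaussian_bound hW (Real.exp (-W)) (Real.exp (ν.re ^ 2 / W)) _))
    hc.aestronglyMeasurable (.of_forall fun t => ?_)
  refine le_trans (le_of_eq ?_) (exp_neg_mul_cosh_mul_exp_le hW le_rfl _ _)
  rw [norm_mul, Complex.norm_exp, Complex.norm_exp, Complex.re_mul_ofReal,
    Complex.re_mul_ofReal, Complex.neg_re, Complex.ofReal_re]

theorem integral_exp_neg_mul_cosh_mul_exp (ν : ℂ) {W : ℝ} (hW : 0 < W) :
    ∫ t : ℝ, Complex.exp (-W * Real.cosh t) * Complex.exp (ν * t) = 2 * besselK ν W := by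
  have hIntg := integrable_exp_neg_mul_cosh_mul_exp ν hW
  rw [← MeasureTheory.integral_add_compl measurableSet_Ioi hIntg (s := Set.Ioi 0), Set.compl_Ioi,
    ← neg_zero, ← integral_comp_neg_Ioi, neg_zero, ← MeasureTheory.integral_add
    hIntg.integrableOn hIntg.comp_neg.integrableOn, besselK, ← MeasureTheory.integral_const_mul]
  congr 1
  ext t
  rw [Real.cosh_neg, Complex.cosh]
  push_cast
  rw [mul_neg]
  ring

theorem besselK_add_one (ν : ℂ) {W : ℝ} (hW : 0 < W) :
    (W / 2 : ℂ) * besselK (ν + 1) W = (W / 2 : ℂ) * besselK (ν - 1) W + ν * besselK ν W := by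
  have hi := fun c : ℂ => integrable_exp_neg_mul_cosh_mul_exp c hW
  have hd : ∀ t : ℝ, HasDerivAt
      (fun t : ℝ => Complex.exp (-W * Real.cosh t) * Complex.exp (ν * t))
      (-(W / 2 : ℂ) * (Complex.exp (-W * Real.cosh t) * Complex.exp ((ν + 1) * t)) +
        (W / 2 : ℂ) * (Complex.exp (-W * Real.cosh t) * Complex.exp ((ν - 1) * t)) +
        ν * (Complex.exp (-W * Real.cosh t) * Complex.exp (ν * t))) t := by
    intro t
    have h1 := (((Real.hasDerivAt_cosh t).ofReal_comp.const_mul (-W : ℂ)).cexp).mul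
      ((((hasDerivAt_id t).ofReal_comp.const_mul ν)).cexp)
    convert! h1 using 1
    rw [Real.sinh_eq, add_mul, sub_mul, Complex.exp_add, Complex.exp_sub, one_mul]
    push_cast
    rw [Complex.exp_neg]
    simp only [id]
    have := Complex.exp_ne_zero t
    field_simp
    ring
  have h0 := MeasureTheory.integral_eq_zero_of_hasDerivAt_of_integrable hd
    ((((hi (ν + 1)).const_mul _).add ((hi (ν - 1)).const_mul _)).add ((hi ν).const_mul _)) (hi ν)
  have hi2 : MeasureTheory.Integrable (fun t : ℝ =>
      -(W / 2 : ℂ) * (Complex.exp (-W * Real.cosh t) * Complex.exp ((ν + 1) * t)) +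
        (W / 2 : ℂ) * (Complex.exp (-W * Real.cosh t) * Complex.exp ((ν - 1) * t))) :=
    ((hi (ν + 1)).const_mul _).add ((hi (ν - 1)).const_mul _)
  rw [MeasureTheory.integral_add hi2 ((hi ν).const_mul _),
    MeasureTheory.integral_add ((hi (ν + 1)).const_mul _)
    ((hi (ν - 1)).const_mul _), MeasureTheory.integral_const_mul, MeasureTheory.integral_const_mul,
    MeasureTheory.integral_const_mul] at h0
  simp only [integral_exp_neg_mul_cosh_mul_exp _ hW] at h0
  linear_combination (-1 / 2) * h0

theorem integral_exp_neg_sub_div_mul_cpow (ν : ℂ) {W : ℝ} (hW : 0 < W) :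
    ∫ u in Set.Ioi (0:ℝ), (Real.exp (-u - W ^ 2 / 4 / u) : ℂ) * (u : ℂ) ^ (ν - 1) =
      2 * (W / 2 : ℂ) ^ ν * besselK ν W := by
  have hsub := MeasureTheory.integral_comp_mul_left_Ioi (fun u : ℝ =>
    (Real.exp (-u - W ^ 2 / 4 / u) : ℂ) * (u : ℂ) ^ (ν - 1)) 0 (show 0 < W / 2 by positivity)
  rw [mul_zero, integral_comp_exp] at hsub
  have hW2 : (W / 2 : ℂ) ≠ 0 := by
    have : (W : ℂ) ≠ 0 := by exact_mod_cast hW.ne'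
    simpa using this
  let h : ℝ → ℂ := fun t => Complex.exp (-W * Real.cosh t) * Complex.exp (ν * t)
  have hpt : ∀ t : ℝ, (Real.exp t : ℂ) * ((Real.exp (-(W / 2 * Real.exp t) - W ^ 2 / 4 /
      (W / 2 * Real.exp t)) : ℂ) * ((W / 2 * Real.exp t : ℝ) : ℂ) ^ (ν - 1)) =
      (W / 2 : ℂ) ^ (ν - 1) * h t := by
    intro t
    have e1 : -(W / 2 * Real.exp t) - W ^ 2 / 4 / (W / 2 * Real.exp t) = -W * Real.cosh t := by
      rw [Real.cosh_eq, Real.exp_neg]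
      have := (Real.exp_pos t).ne'
      field_simp
      ring
    have e2 : ((W / 2 * Real.exp t : ℝ) : ℂ) ^ (ν - 1) =
        (W / 2 : ℂ) ^ (ν - 1) * Complex.exp ((ν - 1) * t) := by
      rw [Complex.ofReal_mul, Complex.mul_cpow_ofReal_nonneg (by positivity) (Real.exp_pos t).le]
      push_cast
      congr 1
      rw [Complex.cpow_def_of_ne_zero (Complex.exp_ne_zero _), ← Complex.ofReal_exp,
        ← Complex.ofReal_log (Real.exp_pos t).le, Real.log_exp, mul_comm]
    rw [e1, e2]
    have e3 : Complex.exp (ν * t) = Complex.exp t * Complex.exp ((ν - 1) * t) := by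
      rw [← Complex.exp_add]; ring_nf
    simp only [h, e3]
    push_cast
    ring
  simp_rw [hpt] at hsub
  rw [MeasureTheory.integral_const_mul] at hsub
  have hfold : ∫ t, h t = 2 * besselK ν W := integral_exp_neg_mul_cosh_mul_exp ν hW
  rw [hfold, Complex.real_smul] at hsub
  have e4 : (W / 2 : ℂ) ^ ν = (W / 2) * (W / 2 : ℂ) ^ (ν - 1) := by
    rw [Complex.cpow_sub _ _ hW2, Complex.cpow_one, mul_div_cancel₀ _ hW2]
  rw [e4]
  have hW3 : (W : ℂ) ≠ 0 := by exact_mod_cast hW.ne'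
  generalize (W / 2 : ℂ) ^ (ν - 1) = p at *
  generalize ∫ u in Set.Ioi (0:ℝ), (Real.exp (-u - W ^ 2 / 4 / u) : ℂ) * (u : ℂ) ^ (ν - 1) = J at *
  push_cast at hsub ⊢
  field_simp at hsub ⊢
  linear_combination -hsub

theorem Complex.hasSum_pow_div_factorial (z : ℂ) :
    HasSum (fun n : ℕ => z ^ n / (n.factorial : ℂ)) (Complex.exp z) := by
  rw [Complex.exp_eq_exp_ℂ]
  exact NormedSpace.expSeries_div_hasSum_exp z

theorem Real.hasSum_pow_div_factorial (x : ℝ) :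
    HasSum (fun n : ℕ => x ^ n / (n.factorial : ℝ)) (Real.exp x) := by
  rw [Real.exp_eq_exp_ℝ]
  exact NormedSpace.expSeries_div_hasSum_exp x

theorem hasSum_exp_mul_besselISeries {μ : ℂ} (hμ : 0 < μ.re) (y z : ℂ) :
    HasSum (fun x : ℕ × ℕ => (y ^ x.1 / (x.1.factorial : ℂ)) *
      ((z / 2) ^ (2 * x.2) / ((x.2.factorial : ℂ) * Complex.Gamma (μ + x.2 + 1))))
      (Complex.exp y * besselISeries μ z) := by
  have h1 := Complex.hasSum_pow_div_factorial y
  have h2 := (summable_besselISeries hμ z).hasSum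
  have h3 := summable_mul_of_summable_norm h1.summable.norm h2.summable.norm
  have h4 := h1.mul h2 h3
  exact h4

/-- Termwise integration of the double series of `exp (-u w ^ 2) * besselI μ (2 u w)`, arranged
by total degree. -/
theorem hasSum_integral_exp_mul_besselI {μ : ℂ} (hμ : 0 < μ.re) {w : ℝ} (hw : 0 < w) {ρ : ℝ → ℂ}
    (hρm : MeasureTheory.AEStronglyMeasurable ρ (MeasureTheory.volume.restrict (Set.Ioi 0)))
    (hρ : MeasureTheory.IntegrableOn
      (fun u : ℝ => ‖ρ u‖ * u ^ μ.re * Real.exp (u * (w ^ 2 + 2 * w))) (Set.Ioi 0)) :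
    HasSum (fun N : ℕ => (w : ℂ) ^ μ * (w : ℂ) ^ (2 * N) *
        ∑ x ∈ Finset.HasAntidiagonal.antidiagonal N, (-1) ^ x.1 /
          ((x.1.factorial : ℂ) * x.2.factorial * Complex.Gamma (μ + x.2 + 1)) *
          ∫ u in Set.Ioi (0:ℝ), ρ u * (u : ℂ) ^ (μ + x.1 + 2 * x.2))
      (∫ u in Set.Ioi (0:ℝ), ρ u * Real.exp (-(u * w ^ 2)) * besselI μ (2 * u * w)) := by
  set C : ℝ := ‖Complex.Gamma (μ + 1)‖⁻¹ with hC
  have hpow : ∀ lam : ℂ, MeasureTheory.AEStronglyMeasurable (fun u : ℝ => (u : ℂ) ^ lam)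
      (MeasureTheory.volume.restrict (Set.Ioi 0)) := fun lam =>
    (ContinuousOn.aestronglyMeasurable (fun u (hu : 0 < u) =>
      (Complex.continuousAt_ofReal_cpow_const u lam (Or.inr hu.ne')).continuousWithinAt)
      measurableSet_Ioi)
  have hrpow : MeasureTheory.AEStronglyMeasurable (fun u : ℝ => u ^ μ.re)
      (MeasureTheory.volume.restrict (Set.Ioi 0)) :=
    (ContinuousOn.aestronglyMeasurable (fun u (hu : 0 < u) =>
      (Real.continuousAt_rpow_const u μ.re (Or.inl hu.ne')).continuousWithinAt)
      measurableSet_Ioi)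
  let F : ℕ × ℕ → ℝ → ℂ := fun x u => (w : ℂ) ^ μ * (w : ℂ) ^ (2 * (x.1 + x.2)) *
    ((-1) ^ x.1 / ((x.1.factorial : ℂ) * x.2.factorial * Complex.Gamma (μ + x.2 + 1)) *
      (ρ u * (u : ℂ) ^ (μ + x.1 + 2 * x.2)))
  have hF : ∀ u : ℝ, 0 < u → ∀ x : ℕ × ℕ, F x u = (ρ u * (u : ℂ) ^ μ * (w : ℂ) ^ μ) *
      (((-(u * w ^ 2) : ℂ) ^ x.1 / (x.1.factorial : ℂ)) *
      ((2 * u * w / 2 : ℂ) ^ (2 * x.2) / ((x.2.factorial : ℂ) * Complex.Gamma (μ + x.2 + 1)))) := by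
    intro u hu x
    have hu0 : (u : ℂ) ≠ 0 := by exact_mod_cast hu.ne'
    have e1 : (u : ℂ) ^ (μ + x.1 + 2 * x.2) = (u : ℂ) ^ μ * (u : ℂ) ^ x.1 * (u : ℂ) ^ (2 * x.2) := by
      rw [Complex.cpow_add _ _ hu0, Complex.cpow_add _ _ hu0, Complex.cpow_natCast,
        ← Complex.cpow_natCast _ (2 * x.2)]
      push_cast
      rfl
    have e2 : (2 * u * w / 2 : ℂ) = u * w := by ring
    simp only [F]
    rw [e1, e2, neg_pow (u * w ^ 2 : ℂ), mul_pow, mul_pow, ← pow_mul, mul_add, pow_add]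
    ring
  have hG := fun m => Complex.norm_inv_Gamma_le hμ m
  let B : ℕ × ℕ → ℝ → ℝ := fun x u => (‖ρ u‖ * u ^ μ.re * w ^ μ.re * C) *
      (((u * w ^ 2) ^ x.1 / (x.1.factorial : ℝ)) *
      ((2 * (u * w)) ^ (2 * x.2) / ((2 * x.2).factorial : ℝ)))
  have hB : ∀ u : ℝ, HasSum (fun x => B x u) ((‖ρ u‖ * u ^ μ.re * w ^ μ.re * C) *
      (Real.exp (u * w ^ 2) * Real.cosh (2 * (u * w)))) := by
    intro u
    have h1 := Real.hasSum_pow_div_factorial (u * w ^ 2)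
    have h2 := Real.hasSum_cosh (2 * (u * w))
    exact (h1.mul h2 (summable_mul_of_summable_norm h1.summable.norm h2.summable.norm)).mul_left _
  have key : HasSum (fun x => ∫ u in Set.Ioi (0:ℝ), F x u)
      (∫ u in Set.Ioi (0:ℝ), ρ u * Real.exp (-(u * w ^ 2)) * besselI μ (2 * u * w)) := by
    refine MeasureTheory.hasSum_integral_of_dominated_convergence B ?_ ?_ ?_ ?_ ?_
    · intro x
      exact ((hρm.mul (hpow _)).const_mul _).const_mul _
    · intro x
      rw [MeasureTheory.ae_restrict_iff' measurableSet_Ioi]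
      refine .of_forall fun u hu => ?_
      have hu : 0 < u := hu
      rw [hF u hu, norm_mul, norm_mul, norm_mul, Complex.norm_cpow_eq_rpow_re_of_pos hu,
        Complex.norm_cpow_eq_rpow_re_of_pos hw]
      have h2 := norm_besselISeries_term_le hμ (z := 2 * u * w) (r := 2 * (u * w))
        (le_of_eq (by simp [abs_of_pos hu, abs_of_pos hw, mul_assoc])) x.2
      have h3 : ‖(-(u * w ^ 2) : ℂ) ^ x.1 / (x.1.factorial : ℂ)‖ =
          (u * w ^ 2) ^ x.1 / (x.1.factorial : ℝ) := by
        simp [abs_of_pos hu]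
      rw [norm_mul, h3]
      calc _ ≤ ‖ρ u‖ * u ^ μ.re * w ^ μ.re * ((u * w ^ 2) ^ x.1 / (x.1.factorial : ℝ) *
              (C * ((2 * (u * w)) ^ (2 * x.2) / ((2 * x.2).factorial : ℝ)))) := by
            gcongr
        _ = _ := by simp only [B]; ring
    · exact .of_forall fun u => (hB u).summable
    · simp_rw [(hB _).tsum_eq]
      refine (hρ.mul_const (w ^ μ.re * C)).mono' ?_ ?_
      · refine (((hρm.norm.mul hrpow).mul_const _).mul_const _).mul ?_
        have : Continuous fun u : ℝ => Real.exp (u * w ^ 2) * Real.cosh (2 * (u * w)) := by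
          have := Real.continuous_cosh
          fun_prop
        exact this.aestronglyMeasurable
      · rw [MeasureTheory.ae_restrict_iff' measurableSet_Ioi]
        refine .of_forall fun u hu => ?_
        have hu : 0 < u := hu
        have hC0 : 0 ≤ C := by positivity
        have hch : Real.cosh (2 * (u * w)) ≤ Real.exp (2 * (u * w)) := by
          rw [Real.cosh_eq]
          have := Real.exp_le_exp.mpr (show -(2 * (u * w)) ≤ 2 * (u * w) by
            have : 0 < u * w := by positivity
            linarith)
          linarith
        have hcp := Real.cosh_pos (2 * (u * w))
        rw [Real.norm_of_nonneg (by positivity)]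
        calc _ ≤ ‖ρ u‖ * u ^ μ.re * w ^ μ.re * C * (Real.exp (u * w ^ 2) *
              Real.exp (2 * (u * w))) := by gcongr
          _ = _ := by
            rw [mul_add, Real.exp_add, show u * (2 * w) = 2 * (u * w) by ring]
            ring
    · rw [MeasureTheory.ae_restrict_iff' measurableSet_Ioi]
      refine .of_forall fun u hu => ?_
      have hu : 0 < u := hu
      have h2 : (2 * u * w : ℂ) ≠ 0 := by
        have h3 : (u : ℂ) ≠ 0 := by exact_mod_cast hu.ne'
        have : (w : ℂ) ≠ 0 := by exact_mod_cast hw.ne'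
        simp [h3, this]
      simp_rw [hF u hu]
      convert! (hasSum_exp_mul_besselISeries hμ (-(u * w ^ 2)) (2 * u * w)).mul_left
        (ρ u * (u : ℂ) ^ μ * (w : ℂ) ^ μ) using 1
      rw [besselI_eq_mul_series μ h2, show (2 * u * w / 2 : ℂ) = u * w by ring,
        Complex.mul_cpow_ofReal_nonneg hu.le hw.le]
      push_cast
      ring
  rw [← Finset.HasAntidiagonal.sigmaAntidiagonalEquivProd.hasSum_iff] at key
  have key2 := key.sigma (fun N => hasSum_fintype _)
  convert! key2 using 1
  ext N
  rw [Finset.mul_sum]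
  rw [← Finset.sum_coe_sort]
  refine Finset.sum_congr rfl fun x _ => ?_
  have hx : x.1.1 + x.1.2 = N := Finset.HasAntidiagonal.mem_antidiagonal.mp x.2
  change _ = ∫ u in Set.Ioi (0:ℝ), F x.1 u
  simp only [F]
  rw [MeasureTheory.integral_const_mul, MeasureTheory.integral_const_mul, hx]

theorem sum_choose_mul_eq_pow_mul {μ κ : ℂ} (hμ : 0 < μ.re) {M : ℂ → ℂ}
    (hM : ∀ z, κ * M z = M (z + 2) - (z + 1) * M (z + 1)) (N : ℕ) :
    ∑ m ∈ Finset.range (N + 1), (N.choose m : ℂ) * (-1) ^ (N + m) *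
      (Complex.Gamma (μ + N + 1) / Complex.Gamma (μ + m + 1)) * M (μ + N + m) =
      κ ^ N * M μ := by
  induction N with
  | zero =>
    have := Complex.Gamma_add_one_ne_zero hμ 0
    simp only [Nat.cast_zero, add_zero] at this
    simp [this]
  | succ N ih =>
    set c : ℕ → ℂ := fun m => (N.choose m : ℂ) * (-1) ^ (N + m) *
      (Complex.Gamma (μ + N + 1) / Complex.Gamma (μ + m + 1)) with hc
    have hΓ : ∀ m : ℕ, Complex.Gamma (μ + (m + 1 : ℕ) + 1) =
        (μ + m + 1) * Complex.Gamma (μ + m + 1) := by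
      intro m
      have h0 : μ + m + 1 ≠ 0 := by
        intro h
        have := congrArg Complex.re h
        simp at this
        have : (0 : ℝ) ≤ m := by positivity
        linarith
      rw [← Complex.Gamma_add_one _ h0]
      push_cast
      ring_nf
    have h00 : c (N + 1) = 0 := by simp [hc]
    have hne := Complex.Gamma_add_one_ne_zero hμ
    have hzero : ((N + 1).choose 0 : ℂ) * (-1) ^ (N + 1 + 0) *
        (Complex.Gamma (μ + (N + 1 : ℕ) + 1) / Complex.Gamma (μ + (0 : ℕ) + 1)) =
        -(μ + N + 1) * c 0 := by
      simp only [hc]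
      rw [hΓ]
      simp only [Nat.choose_zero_right]
      push_cast
      ring
    have hsucc : ∀ m : ℕ, ((N + 1).choose (m + 1) : ℂ) * (-1) ^ (N + 1 + (m + 1)) *
        (Complex.Gamma (μ + (N + 1 : ℕ) + 1) / Complex.Gamma (μ + (m + 1 : ℕ) + 1)) =
        c m - (μ + N + m + 2) * c (m + 1) := by
      intro m
      have h1 : (N.choose (m + 1) : ℂ) * (m + 1) = N.choose m * ((N : ℂ) - m) := by
        by_cases hmN : m ≤ N
        · have := Nat.choose_succ_right_eq N m
          rw [← Nat.cast_sub hmN]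
          exact_mod_cast this
        · rw [Nat.choose_eq_zero_of_lt (by omega), Nat.choose_eq_zero_of_lt (by omega)]
          simp
      simp only [hc]
      rw [hΓ, hΓ, Nat.choose_succ_succ']
      have h2 := hne m
      have h3 : μ + m + 1 ≠ 0 := by
        have := hne (m + 1)
        rw [hΓ] at this
        exact left_ne_zero_of_mul this
      push_cast
      rw [show N + 1 + (m + 1) = N + m + 2 by ring, show N + (m + 1) = N + m + 1 by ring,
        pow_add _ (N + m) 2, pow_succ _ (N + m)]
      field_simp
      linear_combination (-Complex.Gamma (μ + N + 1)) * h1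
    rw [Finset.sum_range_succ', hzero]
    simp_rw [hsucc]
    have hsplit : ∑ m ∈ Finset.range (N + 1), (μ + N + m + 2) * c (m + 1) * M (μ + N + m + 2) +
        (μ + N + 1) * c 0 * M (μ + N + 1) =
        ∑ m ∈ Finset.range (N + 1), (μ + N + m + 1) * c m * M (μ + N + m + 1) := by
      have h1 := Finset.sum_range_succ' (fun m : ℕ => (μ + N + m + 1) * c m * M (μ + N + m + 1)) (N + 1)
      rw [Finset.sum_range_succ] at h1
      rw [h00] at h1
      simp only [Nat.cast_add, Nat.cast_one, Nat.cast_zero, add_zero, mul_zero, zero_mul] at h1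
      rw [h1]
      congr 1
      refine Finset.sum_congr rfl fun m _ => ?_
      rw [show μ + N + (m + 1) + 1 = μ + N + m + 2 by ring]
    have ih' : ∑ m ∈ Finset.range (N + 1), c m * M (μ + N + m) = κ ^ N * M μ := ih
    rw [pow_succ', mul_assoc κ, ← ih', Finset.mul_sum]
    have e1 : ∀ m ∈ Finset.range (N + 1), κ * (c m * M (μ + N + m)) =
        c m * M (μ + N + m + 2) - (μ + N + m + 1) * c m * M (μ + N + m + 1) := by
      intro m _
      linear_combination c m * hM (μ + N + m)
    rw [Finset.sum_congr rfl e1, Finset.sum_sub_distrib, ← hsplit]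
    have e2 : ∀ m ∈ Finset.range (N + 1),
        (c m - (μ + N + m + 2) * c (m + 1)) * M (μ + (N + 1 : ℕ) + (m + 1 : ℕ)) =
        c m * M (μ + N + m + 2) - (μ + N + m + 2) * c (m + 1) * M (μ + N + m + 2) := by
      intro m _
      rw [show μ + (N + 1 : ℕ) + (m + 1 : ℕ) = μ + N + m + 2 by push_cast; ring]
      ring
    rw [Finset.sum_congr rfl e2, Finset.sum_sub_distrib]
    push_cast
    rw [add_zero, ← add_assoc μ]
    ring

theorem sum_antidiagonal_eq_sum_choose {μ : ℂ} (hμ : 0 < μ.re) (M : ℂ → ℂ) (N : ℕ) :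
    ∑ x ∈ Finset.HasAntidiagonal.antidiagonal N, (-1) ^ x.1 /
        ((x.1.factorial : ℂ) * x.2.factorial * Complex.Gamma (μ + x.2 + 1)) *
        M (μ + x.1 + 2 * x.2) =
      (∑ m ∈ Finset.range (N + 1), (N.choose m : ℂ) * (-1) ^ (N + m) *
        (Complex.Gamma (μ + N + 1) / Complex.Gamma (μ + m + 1)) * M (μ + N + m)) /
        (N.factorial * Complex.Gamma (μ + N + 1)) := by
  have h := Finset.Nat.sum_antidiagonal_swap (n := N) (f := fun x : ℕ × ℕ => (-1) ^ x.1 /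
        ((x.1.factorial : ℂ) * x.2.factorial * Complex.Gamma (μ + x.2 + 1)) *
        M (μ + x.1 + 2 * x.2))
  rw [← h]
  simp only [Prod.fst_swap, Prod.snd_swap]
  rw [Finset.Nat.sum_antidiagonal_eq_sum_range_succ (fun m k : ℕ => (-1 : ℂ) ^ k /
        ((k.factorial : ℂ) * m.factorial * Complex.Gamma (μ + m + 1)) *
        M (μ + k + 2 * m)), Finset.sum_div]
  refine Finset.sum_congr rfl fun m hm => ?_
  have hmN : m ≤ N := by simpa [Nat.lt_succ_iff] using hm
  obtain ⟨k, rfl⟩ := Nat.exists_eq_add_of_le hmN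
  rw [Nat.add_sub_cancel_left, show μ + (m + k : ℕ) + m = μ + k + 2 * m by push_cast; ring,
    show m + k + m = k + 2 * m by ring, pow_add, pow_mul]
  have h1 := Complex.Gamma_add_one_ne_zero hμ m
  have h2 := Complex.Gamma_add_one_ne_zero hμ (m + k)
  have h3 : ((m + k).choose m : ℂ) * m.factorial * k.factorial = (m + k).factorial := by
    have := Nat.choose_mul_factorial_mul_factorial (show m ≤ m + k by omega)
    rw [Nat.add_sub_cancel_left] at this
    exact_mod_cast this
  have h4 : (m.factorial : ℂ) ≠ 0 := by exact_mod_cast m.factorial_ne_zero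
  have h5 : (k.factorial : ℂ) ≠ 0 := by exact_mod_cast k.factorial_ne_zero
  have h6 : ((m + k).factorial : ℂ) ≠ 0 := by exact_mod_cast (m + k).factorial_ne_zero
  rw [neg_one_sq, one_pow, mul_one]
  field_simp
  rw [← h3]
  ring

theorem integral_exp_mul_besselI_eq_besselI_mul_besselK {μ : ℂ} (hμ : 0 < μ.re) {w W : ℝ}
    (hw : 0 < w) (hw1 : w ^ 2 + 2 * w < 1) (hW : 0 < W) :
    ∫ u in Set.Ioi (0:ℝ), ((Real.exp (-u - W ^ 2 / 4 / u) / u : ℝ) : ℂ) *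
      Real.exp (-(u * w ^ 2)) * besselI μ (2 * u * w) =
      2 * (besselI μ (w * W) * besselK μ W) := by
  have hW3 : (W : ℂ) ≠ 0 := by exact_mod_cast hW.ne'
  have hW2 : (W / 2 : ℂ) ≠ 0 := by simpa using hW3
  have hw3 : (w : ℂ) ≠ 0 := by exact_mod_cast hw.ne'
  have hcont : ContinuousOn (fun u : ℝ => Real.exp (-u - W ^ 2 / 4 / u) / u) (Set.Ioi 0) := by
    refine ContinuousOn.div ?_ continuousOn_id fun u (hu : 0 < u) => hu.ne'
    refine Real.continuous_exp.comp_continuousOn ?_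
    refine ContinuousOn.sub (by fun_prop) ?_
    exact continuousOn_const.div continuousOn_id fun u (hu : 0 < u) => hu.ne'
  have hm : MeasureTheory.AEStronglyMeasurable
      (fun u : ℝ => Real.exp (-u - W ^ 2 / 4 / u) / u)
      (MeasureTheory.volume.restrict (Set.Ioi 0)) :=
    hcont.aestronglyMeasurable measurableSet_Ioi
  have hexp : ∀ u : ℝ, 0 < u → ‖((Real.exp (-u - W ^ 2 / 4 / u) / u : ℝ) : ℂ)‖ * u ^ μ.re *
      Real.exp (u * (w ^ 2 + 2 * w)) ≤
      u ^ (μ.re - 1) * Real.exp (-(1 - (w ^ 2 + 2 * w)) * u) := by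
    intro u hu
    rw [Complex.norm_real, Real.norm_of_nonneg (by positivity), Real.rpow_sub hu, Real.rpow_one]
    have h1 : Real.exp (-u - W ^ 2 / 4 / u) * Real.exp (u * (w ^ 2 + 2 * w)) ≤
        Real.exp (-(1 - (w ^ 2 + 2 * w)) * u) := by
      rw [← Real.exp_add]
      apply Real.exp_le_exp.mpr
      have : 0 ≤ W ^ 2 / 4 / u := by positivity
      linarith
    calc _ = u ^ μ.re / u * (Real.exp (-u - W ^ 2 / 4 / u) * Real.exp (u * (w ^ 2 + 2 * w))) := by
          ring
      _ ≤ _ := by gcongr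
  have hIntg : MeasureTheory.IntegrableOn
      (fun u : ℝ => ‖((Real.exp (-u - W ^ 2 / 4 / u) / u : ℝ) : ℂ)‖ * u ^ μ.re *
        Real.exp (u * (w ^ 2 + 2 * w))) (Set.Ioi 0) := by
    have h0 := integrableOn_rpow_mul_exp_neg_mul_rpow (s := μ.re - 1) (p := 1)
      (b := 1 - (w ^ 2 + 2 * w)) (by linarith) one_pos (by linarith)
    simp only [Real.rpow_one] at h0
    refine MeasureTheory.Integrable.mono' h0 ?_ ?_
    · refine ContinuousOn.aestronglyMeasurable ?_ measurableSet_Ioi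
      refine ContinuousOn.mul (ContinuousOn.mul ?_ ?_) (by fun_prop)
      · exact (Complex.continuous_ofReal.comp_continuousOn hcont).norm
      · exact fun u (hu : 0 < u) =>
          (Real.continuousAt_rpow_const u μ.re (Or.inl hu.ne')).continuousWithinAt
    · rw [MeasureTheory.ae_restrict_iff' measurableSet_Ioi]
      refine .of_forall fun u hu => ?_
      have hu : 0 < u := hu
      rw [Real.norm_of_nonneg (by positivity)]
      exact hexp u hu
  have H := hasSum_integral_exp_mul_besselI hμ hw
    (ρ := fun u => ((Real.exp (-u - W ^ 2 / 4 / u) / u : ℝ) : ℂ))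
    (Complex.continuous_ofReal.comp_aestronglyMeasurable hm) hIntg
  have hMom : ∀ lam : ℂ, ∫ u in Set.Ioi (0:ℝ), ((Real.exp (-u - W ^ 2 / 4 / u) / u : ℝ) : ℂ) *
      (u : ℂ) ^ lam = 2 * (W / 2 : ℂ) ^ lam * besselK lam W := by
    intro lam
    rw [← integral_exp_neg_sub_div_mul_cpow lam hW]
    refine MeasureTheory.setIntegral_congr_fun measurableSet_Ioi fun u hu => ?_
    have hu : 0 < u := hu
    have hu0 : (u : ℂ) ≠ 0 := by exact_mod_cast hu.ne'
    rw [Complex.cpow_sub _ _ hu0, Complex.cpow_one]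
    push_cast
    ring
  simp only [hMom] at H
  have hrec : ∀ z : ℂ, (W / 2 : ℂ) ^ 2 * (2 * (W / 2 : ℂ) ^ z * besselK z W) =
      2 * (W / 2 : ℂ) ^ (z + 2) * besselK (z + 2) W -
      (z + 1) * (2 * (W / 2 : ℂ) ^ (z + 1) * besselK (z + 1) W) := by
    intro z
    have h1 := besselK_add_one (z + 1) hW
    rw [show z + 1 + 1 = z + 2 by ring, add_sub_cancel_right] at h1
    rw [Complex.cpow_add _ _ hW2, Complex.cpow_add _ _ hW2, Complex.cpow_one,
      Complex.cpow_ofNat]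
    linear_combination (-2 * (W / 2 : ℂ) ^ z * (W / 2)) * h1
  have hsum : ∀ N : ℕ, (w : ℂ) ^ μ * (w : ℂ) ^ (2 * N) *
      ∑ x ∈ Finset.HasAntidiagonal.antidiagonal N, (-1) ^ x.1 /
        ((x.1.factorial : ℂ) * x.2.factorial * Complex.Gamma (μ + x.2 + 1)) *
        (2 * (W / 2 : ℂ) ^ (μ + x.1 + 2 * x.2) * besselK (μ + x.1 + 2 * x.2) W) =
      2 * besselK μ W * ((w * W / 2 : ℂ) ^ μ * ((w * W / 2 : ℂ) ^ (2 * N) /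
        ((N.factorial : ℂ) * Complex.Gamma (μ + N + 1)))) := by
    intro N
    rw [sum_antidiagonal_eq_sum_choose hμ (fun z => 2 * (W / 2 : ℂ) ^ z * besselK z W),
      sum_choose_mul_eq_pow_mul hμ hrec]
    have e : (w * W / 2 : ℂ) ^ μ = (w : ℂ) ^ μ * (W / 2 : ℂ) ^ μ := by
      have := Complex.mul_cpow_ofReal_nonneg hw.le (show 0 ≤ W / 2 by positivity) μ
      push_cast at this
      rw [mul_div_assoc, this]
    rw [e, mul_div_assoc (w : ℂ), mul_pow, ← pow_mul]
    ring
  simp only [hsum] at H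
  have hs := ((summable_besselISeries hμ (w * W)).hasSum.mul_left ((w * W / 2 : ℂ) ^ μ)).mul_left
    (2 * besselK μ W)
  rw [H.unique hs, besselI_eq_mul_series μ (mul_ne_zero hw3 hW3), besselISeries]
  ring

theorem integral_inv_mul_exp_mul_besselI {μ : ℂ} (hμ : 0 < μ.re) {a b s : ℝ} (hb : 0 < b)
    (hab : b < a) (hab2 : a < 6 / 5 * b) (hs : 0 < s) :
    ∫ v in Set.Ioi (0:ℝ), ((Real.exp (-(s ^ 2 / (2 * v))) * Real.exp (-(a ^ 2 + b ^ 2) * v) / v : ℝ) : ℂ)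
        * besselI μ ((a ^ 2 - b ^ 2) * v) =
      2 * (besselI μ (s * (a - b)) * besselK μ (s * (a + b))) := by
  have ha : 0 < a := hb.trans hab
  have hw : 0 < (a - b) / (a + b) := div_pos (by linarith) (by linarith)
  have hw2 : (a - b) / (a + b) < 1 / 10 := by
    rw [div_lt_div_iff₀ (by linarith) (by norm_num)]
    linarith
  have hP : 0 < (a + b) ^ 2 / 2 := by positivity
  have H := integral_exp_mul_besselI_eq_besselI_mul_besselK hμ hw (by nlinarith)
    (show 0 < s * (a + b) by positivity)
  have hab0 : (a + b : ℂ) ≠ 0 := by exact_mod_cast (by positivity : (a + b) ≠ 0)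
  have e1 : (((a - b) / (a + b) : ℝ) : ℂ) * ((s * (a + b) : ℝ) : ℂ) = s * (a - b) := by
    push_cast
    field_simp
  rw [e1] at H
  push_cast at H ⊢
  rw [← H]
  have hsub := MeasureTheory.integral_comp_mul_left_Ioi (fun u : ℝ =>
    ((Real.exp (-u - (s * (a + b)) ^ 2 / 4 / u) / u : ℝ) : ℂ) *
      Real.exp (-(u * ((a - b) / (a + b)) ^ 2)) * besselI μ (2 * u * ((a - b) / (a + b)))) 0 hP
  rw [mul_zero] at hsub
  push_cast at hsub
  have hsub2 : ∀ J K : ℂ, K = ((((a + b) ^ 2 / 2)⁻¹ : ℝ)) • J → J = ((a + b) ^ 2 / 2 : ℝ) • K := by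
    intro J K h
    rw [h, smul_smul, mul_inv_cancel₀ hP.ne', one_smul]
  rw [hsub2 _ _ hsub, ← MeasureTheory.integral_smul]
  refine MeasureTheory.setIntegral_congr_fun measurableSet_Ioi fun v hv => ?_
  have hv : 0 < v := hv
  have hv0 : (v : ℂ) ≠ 0 := by exact_mod_cast hv.ne'
  rw [Complex.real_smul]
  have e2 : (2 * (((a + b) ^ 2 / 2 : ℂ) * v) * ((a - b) / (a + b))) = (a ^ 2 - b ^ 2) * v := by
    field_simp
    ring
  rw [e2, ← mul_assoc, ← Complex.exp_add]
  congr 1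
  rw [div_mul_eq_mul_div (Complex.exp _), ← Complex.exp_add]
  have e3 : -(((a + b) ^ 2 / 2 : ℂ) * v) - (s * (a + b)) ^ 2 / 4 / ((a + b) ^ 2 / 2 * v) +
      -((a + b) ^ 2 / 2 * v * ((a - b) / (a + b)) ^ 2) =
      -(s ^ 2 / (2 * v)) + -(a ^ 2 + b ^ 2) * v := by
    field_simp
    ring
  rw [e3]
  push_cast
  field_simp

theorem Complex.Gamma_add_natCast_eq_ascPochhammer {z : ℂ} (hz : 0 < z.re) (n : ℕ) :
    Complex.Gamma (z + n) = (ascPochhammer ℂ n).eval z * Complex.Gamma z := by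
  induction n with
  | zero => simp
  | succ n ih =>
    have h0 : z + n ≠ 0 := by
      intro h
      have := congrArg Complex.re h
      simp at this
      have : (0 : ℝ) ≤ n := by positivity
      linarith
    rw [Nat.cast_succ, ← add_assoc, Complex.Gamma_add_one _ h0, ih, ascPochhammer_succ_eval]
    ring

theorem fwdDiff_iter_Gamma_div_Gamma {x c : ℂ} (hx : 0 < x.re) (hc : 0 < c.re) (n : ℕ) :
    (fwdDiff (1 : ℕ))^[n] (fun y : ℕ => Complex.Gamma (x + y) / Complex.Gamma (c + y)) =
      fun y : ℕ => (∏ j ∈ Finset.range n, (x - c - j)) *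
        (Complex.Gamma (x + y) / Complex.Gamma (c + n + y)) := by
  induction n with
  | zero => simp
  | succ n ih =>
    rw [Function.iterate_succ_apply', ih]
    ext y
    have hx0 : x + y ≠ 0 := by
      intro h
      have := congrArg Complex.re h
      simp at this
      have : (0 : ℝ) ≤ y := by positivity
      linarith
    have hc0 : 0 < (c + n + y).re := by
      simp
      positivity
    have hc1 : c + n + y ≠ 0 := by
      intro h
      simp [h] at hc0
    have hc2 := Complex.Gamma_ne_zero_of_re_pos hc0
    simp only [fwdDiff]
    rw [Finset.prod_range_succ, show c + (n + 1 : ℕ) + y = c + n + y + 1 by push_cast; ring,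
      show c + n + (y + 1 : ℕ) = c + n + y + 1 by push_cast; ring,
      show x + (y + 1 : ℕ) = x + y + 1 by push_cast; ring,
      Complex.Gamma_add_one _ hx0, Complex.Gamma_add_one _ hc1]
    field_simp
    ring

theorem prod_range_sub_eq_ascPochhammer (N : ℕ) :
    ∏ j ∈ Finset.range N, ((N : ℂ) + 11 - j) = (ascPochhammer ℂ N).eval 12 := by
  rw [← Finset.prod_range_reflect]
  have h : ∀ n : ℕ, (ascPochhammer ℂ n).eval 12 = ∏ j ∈ Finset.range n, (12 + j : ℂ) := by
    intro n
    induction n with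
    | zero => simp
    | succ n ih => rw [ascPochhammer_succ_eval, Finset.prod_range_succ, ih]
  rw [h]
  refine Finset.prod_congr rfl fun j hj => ?_
  have hj : j + 1 ≤ N := Finset.mem_range.mp hj
  rw [Nat.sub_sub, Nat.cast_sub (by omega)]
  push_cast
  ring

theorem sum_choose_mul_Gamma_div_Gamma {μ : ℂ} (hμ : 0 < μ.re) (N : ℕ) :
    ∑ m ∈ Finset.range (N + 1), (N.choose m : ℂ) * (-1) ^ (N + m) *
      (Complex.Gamma (μ + N + 1) / Complex.Gamma (μ + m + 1)) * Complex.Gamma (μ + N + m + 12) =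
      Complex.Gamma (μ + N + 12) * (ascPochhammer ℂ N).eval 12 := by
  have hx : 0 < (μ + N + 12).re := by
    simp
    positivity
  have hc : 0 < (μ + 1).re := by
    simp
    positivity
  have h1 := fwdDiff_iter_eq_sum_shift 1
    (fun y : ℕ => Complex.Gamma (μ + N + 12 + y) / Complex.Gamma (μ + 1 + y)) N 0
  rw [fwdDiff_iter_Gamma_div_Gamma hx hc] at h1
  have h2 : ∀ j ∈ Finset.range N, μ + N + 12 - (μ + 1) - j = (N : ℂ) + 11 - j := by
    intro j _
    ring
  rw [Finset.prod_congr rfl h2, prod_range_sub_eq_ascPochhammer] at h1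
  simp only [Nat.cast_zero, add_zero, zero_add, smul_eq_mul, mul_one] at h1
  have h3 := Complex.Gamma_add_one_ne_zero hμ N
  rw [show μ + 1 + N = μ + N + 1 by ring] at h1
  have h4 : Complex.Gamma (μ + N + 12) * (ascPochhammer ℂ N).eval 12 =
      Complex.Gamma (μ + N + 1) * ((ascPochhammer ℂ N).eval 12 *
        (Complex.Gamma (μ + N + 12) / Complex.Gamma (μ + N + 1))) := by
    field_simp
  rw [h4, h1, Finset.mul_sum]
  refine Finset.sum_congr rfl fun m hm => ?_
  have hmN : m ≤ N := by simpa [Nat.lt_succ_iff] using hm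
  obtain ⟨k, rfl⟩ := Nat.exists_eq_add_of_le hmN
  rw [Nat.add_sub_cancel_left, zsmul_eq_mul, show m + k + m = k + 2 * m by ring, pow_add, pow_mul,
    neg_one_sq, one_pow, mul_one, show μ + 1 + (m : ℂ) = μ + m + 1 by ring,
    show μ + (m + k : ℕ) + 12 + (m : ℂ) = μ + (m + k : ℕ) + m + 12 by ring]
  push_cast
  ring

/-- The formal Gauss hypergeometric series. -/
noncomputable def hypPowerSeries (a b c : ℂ) : PowerSeries ℂ :=
  PowerSeries.mk fun n => ((ascPochhammer ℂ n).eval a * (ascPochhammer ℂ n).eval b) /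
    ((ascPochhammer ℂ n).eval c * (n.factorial : ℂ))

open PowerSeries in
/-- The hypergeometric differential operator. -/
noncomputable def hypOperator (a b c : ℂ) (f : PowerSeries ℂ) : PowerSeries ℂ :=
  X * (1 - X) * d⁄dX ℂ (d⁄dX ℂ f) + (C c - C (a + b + 1) * X) * d⁄dX ℂ f - C (a * b) * f

open PowerSeries in
theorem coeff_hypOperator (a b c : ℂ) (f : PowerSeries ℂ) (n : ℕ) :
    coeff n (hypOperator a b c f) =
      (n + 1) * (n + c) * coeff (n + 1) f - (n + a) * (n + b) * coeff n f := by
  have e : hypOperator a b c f = X * d⁄dX ℂ (d⁄dX ℂ f) - X * (X * d⁄dX ℂ (d⁄dX ℂ f)) +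
      C c * d⁄dX ℂ f - C (a + b + 1) * (X * d⁄dX ℂ f) - C (a * b) * f := by
    rw [hypOperator]
    ring
  rw [e]
  obtain ⟨s, hs⟩ : ∃ s, s = a + b + 1 := ⟨_, rfl⟩
  rw [← hs]
  simp only [map_sub, map_add, coeff_C_mul]
  rcases n with _ | _ | n
  · simp [coeff_derivative]
  · simp only [zero_add, coeff_succ_X_mul, coeff_zero_X_mul, coeff_derivative]
    rw [hs]
    push_cast
    ring
  · simp only [coeff_succ_X_mul, coeff_derivative, hs]
    push_cast
    ring

open PowerSeries in
theorem hypOperator_hypPowerSeries (a b : ℂ) {c : ℂ} (hc : ∀ n : ℕ, (n : ℂ) + c ≠ 0) :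
    hypOperator a b c (hypPowerSeries a b c) = 0 := by
  ext n
  rw [coeff_hypOperator, hypPowerSeries, coeff_mk, coeff_mk]
  have h1 : ∀ n : ℕ, (ascPochhammer ℂ n).eval c ≠ 0 := by
    intro n
    induction n with
    | zero => simp
    | succ n ih =>
      rw [ascPochhammer_succ_eval, add_comm c]
      exact mul_ne_zero ih (hc n)
  rw [ascPochhammer_succ_eval, ascPochhammer_succ_eval, ascPochhammer_succ_eval, Nat.factorial_succ]
  have h2 := h1 n
  have h3 := hc n
  have h4 : (n.factorial : ℂ) ≠ 0 := by exact_mod_cast n.factorial_ne_zero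
  have h5 : (n + 1 : ℂ) ≠ 0 := by exact_mod_cast n.succ_ne_zero
  rw [add_comm c]
  rw [map_zero]
  push_cast
  field_simp
  ring

open PowerSeries in
theorem eq_hypPowerSeries {a b c : ℂ} (hc : ∀ n : ℕ, (n : ℂ) + c ≠ 0) {f : PowerSeries ℂ}
    (h0 : coeff 0 f = 1) (hf : hypOperator a b c f = 0) : f = hypPowerSeries a b c := by
  ext n
  induction n with
  | zero => simp [h0, hypPowerSeries]
  | succ n ih =>
    have h1 := congrArg (coeff n) hf
    have h2 := congrArg (coeff n) (hypOperator_hypPowerSeries a b hc)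
    rw [coeff_hypOperator] at h1 h2
    rw [ih] at h1
    have h5 : (n + 1 : ℂ) * (n + c) ≠ 0 :=
      mul_ne_zero (by exact_mod_cast n.succ_ne_zero) (hc n)
    apply mul_left_cancel₀ h5
    linear_combination h1 - h2

open PowerSeries in
/-- Euler's transformation `(1 - z) ^ (a + b - c) F(a, b; c; z) = F(c - a, c - b; c; z)`. -/
theorem one_sub_X_pow_mul_hypPowerSeries {μ : ℂ} (hμ : 0 < μ.re) :
    (1 - X) ^ 23 * hypPowerSeries (μ + 12) 12 (μ + 1) =
      hypPowerSeries (μ - 11) (-11) (μ + 1) := by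
  have hc : ∀ n : ℕ, (n : ℂ) + (μ + 1) ≠ 0 := by
    intro n h
    have := congrArg Complex.re h
    simp at this
    have : (0 : ℝ) ≤ n := by positivity
    linarith
  apply eq_hypPowerSeries hc
  · simp [hypPowerSeries]
  · have hg := hypOperator_hypPowerSeries (μ + 12) 12 hc
    generalize hypPowerSeries (μ + 12) 12 (μ + 1) = g at hg ⊢
    have d1 : d⁄dX ℂ ((1 - X : PowerSeries ℂ) ^ 23 * g) =
        (1 - X) ^ 23 * d⁄dX ℂ g - 23 * (1 - X) ^ 22 * g := by
      rw [Derivation.leibniz, derivative_pow, map_sub, derivative_X, derivative_one]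
      simp only [smul_eq_mul]
      push_cast
      ring
    have d2 : d⁄dX ℂ ((1 - X) ^ 23 * d⁄dX ℂ g - 23 * (1 - X) ^ 22 * g) =
        (1 - X) ^ 23 * d⁄dX ℂ (d⁄dX ℂ g) - 46 * (1 - X) ^ 22 * d⁄dX ℂ g +
          506 * (1 - X) ^ 21 * g := by
      have h23 : d⁄dX ℂ (23 : PowerSeries ℂ) = 0 := by
        exact_mod_cast (d⁄dX ℂ).map_natCast 23
      rw [map_sub, Derivation.leibniz, Derivation.leibniz, Derivation.leibniz, derivative_pow,
        derivative_pow, map_sub, derivative_X, derivative_one, h23]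
      simp only [smul_eq_mul]
      push_cast
      ring
    rw [hypOperator] at hg ⊢
    rw [d1, d2]
    simp only [map_add, map_sub, map_mul, map_neg, map_one, map_ofNat] at hg ⊢
    linear_combination (1 - X) ^ 23 * hg

open PowerSeries in
theorem hasSum_coeff_one_sub_X_pow_mul {f : PowerSeries ℂ} {z S : ℂ}
    (h : HasSum (fun n => coeff n f * z ^ n) S) (k : ℕ) :
    HasSum (fun n => coeff n ((1 - X) ^ k * f) * z ^ n) ((1 - z) ^ k * S) := by
  induction k with
  | zero => simpa using h
  | succ k ih =>
    set g := (1 - X) ^ k * f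
    have e : (1 - X) ^ (k + 1) * f = g - X * g := by
      simp only [g]
      ring
    have h1 : HasSum (fun n => coeff n (X * g) * z ^ n) (z * ((1 - z) ^ k * S)) := by
      rw [← hasSum_nat_add_iff' 1]
      simp only [coeff_succ_X_mul]
      convert! ih.mul_left z using 1
      · ext n
        ring
      · simp
    rw [e]
    convert! ih.sub h1 using 1
    · ext n
      rw [map_sub]
      ring
    · ring

theorem integral_pow_mul_exp_mul_besselI_eq_hyp2F1 {μ : ℂ} (hμ : 0 < μ.re) {w : ℝ}
    (hw : 0 < w) (hw1 : w ^ 2 + 2 * w < 1) :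
    (1 - (w : ℂ) ^ 2) ^ 23 *
      ∫ u in Set.Ioi (0:ℝ), ((u ^ 11 * Real.exp (-u) : ℝ) : ℂ) *
      Real.exp (-(u * w ^ 2)) * besselI μ (2 * u * w) =
      Complex.Gamma (μ + 12) / Complex.Gamma (μ + 1) * (w : ℂ) ^ μ *
        hyp2F1 (μ - 11) (-11) (μ + 1) ((w : ℂ) ^ 2) := by
  have hw3 : (w : ℂ) ≠ 0 := by exact_mod_cast hw.ne'
  have hIntg : MeasureTheory.IntegrableOn
      (fun u : ℝ => ‖((u ^ 11 * Real.exp (-u) : ℝ) : ℂ)‖ * u ^ μ.re *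
        Real.exp (u * (w ^ 2 + 2 * w))) (Set.Ioi 0) := by
    have h0 := integrableOn_rpow_mul_exp_neg_mul_rpow (s := 11 + μ.re) (p := 1)
      (b := 1 - (w ^ 2 + 2 * w)) (by linarith) one_pos (by linarith)
    simp only [Real.rpow_one] at h0
    refine h0.congr_fun (fun u hu => ?_) measurableSet_Ioi
    have hu : 0 < u := hu
    beta_reduce
    rw [Complex.norm_real, Real.norm_of_nonneg (by positivity), Real.rpow_add hu,
      show (11 : ℝ) = (11 : ℕ) by norm_num, Real.rpow_natCast,
      show -(1 - (w ^ 2 + 2 * w)) * u = -u + u * (w ^ 2 + 2 * w) by ring, Real.exp_add]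
    ring
  have H := hasSum_integral_exp_mul_besselI hμ hw
    (ρ := fun u => ((u ^ 11 * Real.exp (-u) : ℝ) : ℂ))
    (by fun_prop) hIntg
  have hMom : ∀ lam : ℂ, 0 < lam.re → ∫ u in Set.Ioi (0:ℝ), ((u ^ 11 * Real.exp (-u) : ℝ) : ℂ) *
      (u : ℂ) ^ lam = Complex.Gamma (lam + 12) := by
    intro lam hlam
    rw [Complex.Gamma_eq_integral (by simp; positivity), Complex.GammaIntegral]
    refine MeasureTheory.setIntegral_congr_fun measurableSet_Ioi fun u hu => ?_
    have hu : 0 < u := hu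
    have hu0 : (u : ℂ) ≠ 0 := by exact_mod_cast hu.ne'
    rw [show lam + 12 - 1 = lam + (11 : ℕ) by push_cast; ring, Complex.cpow_add _ _ hu0,
      Complex.cpow_natCast]
    push_cast
    ring
  have hc0 : 0 < (μ + 1).re := by simp; linarith
  have hc12 : 0 < (μ + 12).re := by simp; linarith
  have hG1 := Complex.Gamma_ne_zero_of_re_pos hc0
  have hsum : ∀ N : ℕ, (w : ℂ) ^ μ * (w : ℂ) ^ (2 * N) *
      ∑ x ∈ Finset.HasAntidiagonal.antidiagonal N, (-1) ^ x.1 /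
        ((x.1.factorial : ℂ) * x.2.factorial * Complex.Gamma (μ + x.2 + 1)) *
        (∫ u in Set.Ioi (0:ℝ), ((u ^ 11 * Real.exp (-u) : ℝ) : ℂ) *
          (u : ℂ) ^ (μ + x.1 + 2 * x.2)) =
      Complex.Gamma (μ + 12) / Complex.Gamma (μ + 1) * (w : ℂ) ^ μ *
        (PowerSeries.coeff N (hypPowerSeries (μ + 12) 12 (μ + 1)) * ((w : ℂ) ^ 2) ^ N) := by
    intro N
    have e1 : ∀ x ∈ Finset.HasAntidiagonal.antidiagonal N, (-1) ^ x.1 /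
        ((x.1.factorial : ℂ) * x.2.factorial * Complex.Gamma (μ + x.2 + 1)) *
        (∫ u in Set.Ioi (0:ℝ), ((u ^ 11 * Real.exp (-u) : ℝ) : ℂ) *
          (u : ℂ) ^ (μ + x.1 + 2 * x.2)) = (-1) ^ x.1 /
        ((x.1.factorial : ℂ) * x.2.factorial * Complex.Gamma (μ + x.2 + 1)) *
        (fun z => Complex.Gamma (z + 12)) (μ + x.1 + 2 * x.2) := by
      intro x _
      rw [hMom]
      simp
      positivity
    rw [Finset.sum_congr rfl e1, sum_antidiagonal_eq_sum_choose hμ (fun z => Complex.Gamma (z + 12)),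
      sum_choose_mul_Gamma_div_Gamma hμ,
      hypPowerSeries, PowerSeries.coeff_mk, show μ + N + 12 = μ + 12 + N by ring,
      show μ + N + 1 = μ + 1 + N by ring, Complex.Gamma_add_natCast_eq_ascPochhammer hc12,
      Complex.Gamma_add_natCast_eq_ascPochhammer hc0, pow_mul]
    have h1 := Complex.Gamma_add_one_ne_zero hμ N
    rw [show μ + N + 1 = μ + 1 + N by ring, Complex.Gamma_add_natCast_eq_ascPochhammer hc0] at h1
    have h2 := left_ne_zero_of_mul h1
    have h4 : (N.factorial : ℂ) ≠ 0 := by exact_mod_cast N.factorial_ne_zero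
    field_simp
  simp only [hsum] at H
  have hK : Complex.Gamma (μ + 12) / Complex.Gamma (μ + 1) * (w : ℂ) ^ μ ≠ 0 :=
    mul_ne_zero (div_ne_zero (Complex.Gamma_ne_zero_of_re_pos hc12) hG1)
      (by simp [Complex.cpow_eq_zero_iff, hw3])
  have H2 := H.mul_left (Complex.Gamma (μ + 12) / Complex.Gamma (μ + 1) * (w : ℂ) ^ μ)⁻¹
  simp only [inv_mul_cancel_left₀ hK] at H2
  have H3 := hasSum_coeff_one_sub_X_pow_mul H2 23
  rw [one_sub_X_pow_mul_hypPowerSeries hμ] at H3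
  simp only [hypPowerSeries, PowerSeries.coeff_mk] at H3
  rw [hyp2F1, H3.tsum_eq]
  generalize (∫ u in Set.Ioi (0:ℝ), ((u ^ 11 * Real.exp (-u) : ℝ) : ℂ) *
      Real.exp (-(u * w ^ 2)) * besselI μ (2 * u * w)) = J
  rw [mul_left_comm, mul_inv_cancel_left₀ hK]

theorem integral_pow_mul_exp_mul_besselI {μ : ℂ} (hμ : 0 < μ.re) {A B : ℝ} (hB : 0 < B)
    (hAB : B < A) (hAB2 : A < 6 / 5 * B) :
    ∫ v in Set.Ioi (0:ℝ), ((v ^ 11 * Real.exp (-(A ^ 2 + B ^ 2) * v) : ℝ) : ℂ)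
        * besselI μ ((A ^ 2 - B ^ 2) * v) =
      (Complex.Gamma (μ + 12) / Complex.Gamma (μ + 1)) / (2 ^ 34 * (A * B)) *
        ((A - B) / (A + B) : ℂ) ^ μ * (1 / A + 1 / B : ℂ) ^ 22 *
        hyp2F1 (μ - 11) (-11) (μ + 1) (((A - B) / (A + B) : ℂ) ^ 2) := by
  have ha : 0 < A := hB.trans hAB
  have hw : 0 < (A - B) / (A + B) := div_pos (by linarith) (by linarith)
  have hw2 : (A - B) / (A + B) < 1 / 10 := by
    rw [div_lt_div_iff₀ (by linarith) (by norm_num)]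
    linarith
  have hP : 0 < (A + B) ^ 2 / 2 := by positivity
  have H := integral_pow_mul_exp_mul_besselI_eq_hyp2F1 hμ hw (by nlinarith)
  have hAB0 : (A + B : ℂ) ≠ 0 := by exact_mod_cast (by positivity : (A + B) ≠ 0)
  have hA0 : (A : ℂ) ≠ 0 := by exact_mod_cast ha.ne'
  have hB0 : (B : ℂ) ≠ 0 := by exact_mod_cast hB.ne'
  have hsub := MeasureTheory.integral_comp_mul_left_Ioi (fun u : ℝ =>
    ((u ^ 11 * Real.exp (-u) : ℝ) : ℂ) *
      Real.exp (-(u * ((A - B) / (A + B)) ^ 2)) *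
        besselI μ (2 * u * ((A - B) / (A + B) : ℝ))) 0 hP
  rw [mul_zero] at hsub
  have hpt : ∀ v ∈ Set.Ioi (0:ℝ), ((((A + B) ^ 2 / 2 * v) ^ 11 *
      Real.exp (-((A + B) ^ 2 / 2 * v)) : ℝ) : ℂ) *
      Real.exp (-((A + B) ^ 2 / 2 * v * ((A - B) / (A + B)) ^ 2)) *
        besselI μ (2 * ((A + B) ^ 2 / 2 * v : ℝ) * ((A - B) / (A + B) : ℝ)) =
      ((A + B) ^ 2 / 2) ^ 11 * (((v ^ 11 * Real.exp (-(A ^ 2 + B ^ 2) * v) : ℝ) : ℂ)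
        * besselI μ ((A ^ 2 - B ^ 2) * v)) := by
    intro v _
    have e2 : (2 * ((A + B) ^ 2 / 2 * v : ℝ) * ((A - B) / (A + B) : ℝ) : ℂ) =
        (A ^ 2 - B ^ 2) * v := by
      push_cast
      field_simp
      ring
    rw [e2, ← mul_assoc]
    congr 1
    rw [← Complex.ofReal_mul, mul_assoc, ← Real.exp_add]
    have e3 : -((A + B) ^ 2 / 2 * v) + -((A + B) ^ 2 / 2 * v * ((A - B) / (A + B)) ^ 2) =
        -(A ^ 2 + B ^ 2) * v := by
      field_simp
      ring
    rw [e3]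
    push_cast
    ring
  rw [MeasureTheory.setIntegral_congr_fun measurableSet_Ioi hpt,
    MeasureTheory.integral_const_mul, Complex.real_smul] at hsub
  have ew : (((A - B) / (A + B) : ℝ) : ℂ) = (A - B) / (A + B) := by push_cast; rfl
  generalize (∫ u in Set.Ioi (0:ℝ), ((u ^ 11 * Real.exp (-u) : ℝ) : ℂ) *
      Real.exp (-(u * ((A - B) / (A + B)) ^ 2)) *
        besselI μ (2 * u * ((A - B) / (A + B) : ℝ))) = J at hsub H
  generalize (∫ v in Set.Ioi (0:ℝ), ((v ^ 11 * Real.exp (-(A ^ 2 + B ^ 2) * v) : ℝ) : ℂ)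
        * besselI μ ((A ^ 2 - B ^ 2) * v)) = K at hsub ⊢
  rw [ew] at H
  generalize hyp2F1 (μ - 11) (-11) (μ + 1) (((A - B) / (A + B) : ℂ) ^ 2) = h2 at H ⊢
  have e4 : 1 - ((A - B) / (A + B) : ℂ) ^ 2 = 4 * (A * B) / (A + B) ^ 2 := by
    field_simp
    ring
  rw [e4] at H
  have e5 : (1 / A + 1 / B : ℂ) = (A + B) / (A * B) := by
    field_simp
    ring
  rw [e5]
  generalize Complex.Gamma (μ + 12) / Complex.Gamma (μ + 1) = G at H ⊢
  generalize ((A - B) / (A + B) : ℂ) ^ μ = p at H ⊢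
  push_cast at hsub
  have hJ : J = ((A + B) ^ 2 / 2 : ℂ) ^ 12 * K := by
    have : (A + B : ℂ) ^ 2 / 2 ≠ 0 := div_ne_zero (pow_ne_zero _ hAB0) two_ne_zero
    rw [pow_succ' _ 11, mul_assoc, hsub, mul_inv_cancel_left₀ this]
  rw [hJ] at H
  have hAB3 : (A * B : ℂ) ≠ 0 := mul_ne_zero hA0 hB0
  generalize (A * B : ℂ) = q at *
  generalize (A + B : ℂ) = r at *
  field_simp at H ⊢
  linear_combination H / 4096

theorem integral_tsum_of_norm_le_mul {F : ℕ → ℝ → ℂ} {c : ℕ → ℝ} {g : ℝ → ℝ}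
    (hF : ∀ n, ContinuousOn (F n) (Set.Ioi 0)) (hc : Summable c)
    (hg : MeasureTheory.IntegrableOn g (Set.Ioi 0))
    (h : ∀ n, ∀ v ∈ Set.Ioi (0:ℝ), ‖F n v‖ ≤ c n * g v) :
    ∫ v in Set.Ioi (0:ℝ), ∑' n, F n v = ∑' n, ∫ v in Set.Ioi (0:ℝ), F n v := by
  refine (MeasureTheory.hasSum_integral_of_dominated_convergence (fun n v => c n * g v)
    (fun n => (hF n).aestronglyMeasurable measurableSet_Ioi)
    (fun n => ?_) ?_ ?_ ?_).tsum_eq.symm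
  · filter_upwards [MeasureTheory.ae_restrict_mem measurableSet_Ioi] with v hv using h n v hv
  · exact Filter.Eventually.of_forall fun v => hc.mul_right _
  · simp only [tsum_mul_right]
    exact hg.const_mul _
  · filter_upwards [MeasureTheory.ae_restrict_mem measurableSet_Ioi] with v hv
    exact (Summable.of_norm_bounded (hc.mul_right _) fun n => h n v hv).hasSum

theorem Real.exp_neg_le_factorial_div_pow {x : ℝ} (hx : 0 < x) (k : ℕ) :
    Real.exp (-x) ≤ k.factorial / x ^ k := by
  have h := Real.pow_div_factorial_le_exp x hx.le k
  rw [Real.exp_neg, inv_le_comm₀ (Real.exp_pos x) (by positivity), inv_div]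
  exact h

theorem tsum_mul_integral_besselI {τ : ℕ → ℂ} (hτ : IsRamanujanTau τ) {μ : ℂ} (hμ : 0 < μ.re)
    {p q : ℝ} (hq : 0 < q) (hqp : q < p) {φ : ℕ → ℝ → ℝ} {D : ℝ} {k : ℕ}
    (hφ : ∀ n, ContinuousOn (φ n) (Set.Ioi 0))
    (hφb : ∀ n : ℕ, ∀ v ∈ Set.Ioi (0:ℝ), |φ n v| ≤ D * v ^ k / ((n:ℝ) + 1) ^ 8) :
    ∑' n : ℕ, τ (n + 1) * ∫ v in Set.Ioi (0:ℝ), ((φ n v * Real.exp (-(p + q) * v) : ℝ) : ℂ) *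
        besselI μ ((p - q) * v) =
      ∫ v in Set.Ioi (0:ℝ), (∑' n : ℕ, τ (n + 1) * (φ n v : ℂ)) *
        ((Real.exp (-(p + q) * v) : ℝ) * besselI μ ((p - q) * v)) := by
  obtain ⟨C, hC, hCτ⟩ := hτ.exists_norm_le
  obtain ⟨K, hK, hKI⟩ := exists_norm_besselI_le hμ
  have hpq : 0 < p - q := by linarith
  have hD : 0 ≤ D := by
    have := (abs_nonneg _).trans (hφb 0 1 (by simp))
    simpa using this
  have hc : Summable (fun n : ℕ => C * D * (1 / ((n:ℝ) + 1) ^ 2)) := by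
    have := (summable_nat_add_iff 1).2 (Real.summable_one_div_nat_pow.2 (one_lt_two))
    simp only [Nat.cast_add, Nat.cast_one] at this
    exact this.mul_left _
  have hg : MeasureTheory.IntegrableOn (fun v : ℝ => (K * (p - q) ^ μ.re) *
      (v ^ ((k : ℝ) + μ.re) * Real.exp (-(2 * q) * v))) (Set.Ioi 0) := by
    have h0 := integrableOn_rpow_mul_exp_neg_mul_rpow (s := k + μ.re) (p := 1)
      (b := 2 * q) (by linarith [(Nat.cast_nonneg k : (0:ℝ) ≤ k)]) one_pos (by linarith)
    simp only [Real.rpow_one] at h0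
    exact h0.const_mul _
  have hre : ∀ v : ℝ, 0 < v → 0 < ((p - q : ℂ) * v).re := by
    intro v hv
    rw [← Complex.ofReal_sub, ← Complex.ofReal_mul, Complex.ofReal_re]
    positivity
  have hI : ContinuousOn (fun v : ℝ => besselI μ ((p - q) * v)) (Set.Ioi 0) := by
    intro v hv
    refine ContinuousAt.continuousWithinAt ?_
    exact (differentiableAt_besselI hμ (hre v hv)).continuousAt.comp
      (f := fun v : ℝ => ((p - q) * v : ℂ)) (by fun_prop)
  have key := integral_tsum_of_norm_le_mul (F := fun n v => τ (n + 1) *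
    (((φ n v * Real.exp (-(p + q) * v) : ℝ) : ℂ) * besselI μ ((p - q) * v))) (fun n => ?_) hc hg ?_
  · rw [← tsum_congr (fun n => MeasureTheory.integral_const_mul _ _), ← key]
    refine MeasureTheory.setIntegral_congr_fun measurableSet_Ioi fun v hv => ?_
    rw [← tsum_mul_right]
    refine tsum_congr fun n => ?_
    push_cast
    ring
  · refine continuousOn_const.mul (ContinuousOn.mul ?_ hI)
    exact Complex.continuous_ofReal.comp_continuousOn ((hφ n).mul (by fun_prop))
  · intro n v hv
    have hv0 : 0 < v := hv
    have h1 := hφb n v hv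
    have h2 := hKI _ (hre v hv0)
    have h3 : ((p - q : ℂ) * v) = (((p - q) * v : ℝ) : ℂ) := by push_cast; rfl
    rw [h3, Complex.ofReal_re, Complex.norm_real, Real.norm_of_nonneg (by positivity),
      Real.mul_rpow hpq.le hv0.le] at h2
    rw [h3, norm_mul, norm_mul, Complex.norm_real, norm_mul, Real.norm_eq_abs,
      Real.norm_of_nonneg (Real.exp_pos _).le]
    calc _ ≤ C * ((n:ℝ) + 1) ^ 6 * ((D * v ^ k / ((n:ℝ) + 1) ^ 8) * Real.exp (-(p + q) * v) *
          (K * ((p - q) ^ μ.re * v ^ μ.re) * Real.exp ((p - q) * v))) := by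
          gcongr
          exact hCτ n
      _ = _ := by
        rw [Real.rpow_add hv0, Real.rpow_natCast,
          show -(2 * q) * v = -(p + q) * v + (p - q) * v by ring, Real.exp_add]
        field_simp

theorem tsum_besselI_mul_besselK_ofReal {τ : ℕ → ℂ} (hτ : IsRamanujanTau τ) {μ : ℂ}
    (hμ : 0 < μ.re) {a b : ℝ} (hb : 0 < b) (hab : b < a) (hab2 : a < 6 / 5 * b) :
    ∑' n : ℕ, τ (n + 1) * (besselI μ ((π * √(n + 1) : ℝ) * (a - b)) *
        besselK μ ((π * √(n + 1) : ℝ) * (a + b))) =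
      2 / (2 * (π : ℂ)) ^ 12 * (Complex.Gamma (μ + 12) / Complex.Gamma (μ + 1)) *
        ∑' n : ℕ, τ (n + 1) *
          (1 / ((√(4 * (n + 1) + a ^ 2) : ℝ) * (√(4 * (n + 1) + b ^ 2) : ℝ)) *
          (((√(4 * (n + 1) + a ^ 2) : ℝ) - (√(4 * (n + 1) + b ^ 2) : ℝ)) /
            ((√(4 * (n + 1) + a ^ 2) : ℝ) + (√(4 * (n + 1) + b ^ 2) : ℝ)) : ℂ) ^ μ *
          (1 / (√(4 * (n + 1) + a ^ 2) : ℝ) + 1 / (√(4 * (n + 1) + b ^ 2) : ℝ) : ℂ) ^ 22 *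
          hyp2F1 (μ - 11) (-11) (μ + 1)
            ((((√(4 * (n + 1) + a ^ 2) : ℝ) - (√(4 * (n + 1) + b ^ 2) : ℝ)) /
            ((√(4 * (n + 1) + a ^ 2) : ℝ) + (√(4 * (n + 1) + b ^ 2) : ℝ)) : ℂ) ^ 2)) := by
  have ha : 0 < a := hb.trans hab
  have hba : b ^ 2 < a ^ 2 := by nlinarith
  have hL := tsum_mul_integral_besselI hτ hμ (p := a ^ 2) (q := b ^ 2) (by positivity) hba
    (φ := fun n v => Real.exp (-((n + 1) * (π ^ 2 / (2 * v)))) / v)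
    (D := 256 * (8 : ℕ).factorial) (k := 7) ?_ ?_
  · have hR := tsum_mul_integral_besselI hτ hμ (p := a ^ 2) (q := b ^ 2) (by positivity) hba
      (φ := fun n v => v ^ 11 * Real.exp (-(8 * (n + 1) * v)))
      (D := (8 : ℕ).factorial) (k := 3) ?_ ?_
    · have e1 : ∀ n : ℕ, τ (n + 1) * (besselI μ ((π * √(n + 1) : ℝ) * (a - b)) *
          besselK μ ((π * √(n + 1) : ℝ) * (a + b))) = 1 / 2 * (τ (n + 1) *
          ∫ v in Set.Ioi (0:ℝ), ((Real.exp (-((n + 1) * (π ^ 2 / (2 * v)))) / v *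
            Real.exp (-(a ^ 2 + b ^ 2) * v) : ℝ) : ℂ) *
            besselI μ (((a ^ 2 : ℝ) - (b ^ 2 : ℝ)) * v)) := by
        intro n
        have h := integral_inv_mul_exp_mul_besselI hμ hb hab hab2 (s := π * √(n + 1))
          (by positivity)
        rw [show τ (n + 1) * (besselI μ ((π * √(n + 1) : ℝ) * (a - b)) *
          besselK μ ((π * √(n + 1) : ℝ) * (a + b))) = 1 / 2 * (τ (n + 1) *
          (2 * (besselI μ ((π * √(n + 1) : ℝ) * (a - b)) *
          besselK μ ((π * √(n + 1) : ℝ) * (a + b))))) by ring, ← h]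
        congr 2
        refine MeasureTheory.setIntegral_congr_fun measurableSet_Ioi fun v hv => ?_
        rw [mul_pow, Real.sq_sqrt (by positivity),
          show π ^ 2 * ((n : ℝ) + 1) / (2 * v) = (n + 1) * (π ^ 2 / (2 * v)) by ring,
          mul_div_right_comm, Complex.ofReal_pow, Complex.ofReal_pow]
      have e2 : ∀ n : ℕ, τ (n + 1) *
          (1 / ((√(4 * (n + 1) + a ^ 2) : ℝ) * (√(4 * (n + 1) + b ^ 2) : ℝ)) *
          (((√(4 * (n + 1) + a ^ 2) : ℝ) - (√(4 * (n + 1) + b ^ 2) : ℝ)) /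
            ((√(4 * (n + 1) + a ^ 2) : ℝ) + (√(4 * (n + 1) + b ^ 2) : ℝ)) : ℂ) ^ μ *
          (1 / (√(4 * (n + 1) + a ^ 2) : ℝ) + 1 / (√(4 * (n + 1) + b ^ 2) : ℝ) : ℂ) ^ 22 *
          hyp2F1 (μ - 11) (-11) (μ + 1)
            ((((√(4 * (n + 1) + a ^ 2) : ℝ) - (√(4 * (n + 1) + b ^ 2) : ℝ)) /
            ((√(4 * (n + 1) + a ^ 2) : ℝ) + (√(4 * (n + 1) + b ^ 2) : ℝ)) : ℂ) ^ 2)) =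
          2 ^ 34 * (Complex.Gamma (μ + 12) / Complex.Gamma (μ + 1))⁻¹ * (τ (n + 1) *
          ∫ v in Set.Ioi (0:ℝ), ((v ^ 11 * Real.exp (-(8 * (n + 1) * v)) *
            Real.exp (-(a ^ 2 + b ^ 2) * v) : ℝ) : ℂ) *
            besselI μ (((a ^ 2 : ℝ) - (b ^ 2 : ℝ)) * v)) := by
        intro n
        have hA := Real.sq_sqrt (show 0 ≤ 4 * ((n : ℝ) + 1) + a ^ 2 by positivity)
        have hB := Real.sq_sqrt (show 0 ≤ 4 * ((n : ℝ) + 1) + b ^ 2 by positivity)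
        have hB0 : 0 < √(4 * ((n : ℝ) + 1) + b ^ 2) := by positivity
        have hA0 : 0 < √(4 * ((n : ℝ) + 1) + a ^ 2) := by positivity
        generalize √(4 * ((n : ℝ) + 1) + a ^ 2) = A at *
        generalize √(4 * ((n : ℝ) + 1) + b ^ 2) = B at *
        have hn : (0 : ℝ) ≤ n := n.cast_nonneg
        have h := integral_pow_mul_exp_mul_besselI hμ hB0 (A := A)
          (by apply lt_of_pow_lt_pow_left₀ 2 hA0.le; linarith)
          (by apply lt_of_pow_lt_pow_left₀ 2 (by positivity); nlinarith)
        have h' : ∫ v in Set.Ioi (0:ℝ), ((v ^ 11 * Real.exp (-(8 * (n + 1) * v)) *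
            Real.exp (-(a ^ 2 + b ^ 2) * v) : ℝ) : ℂ) *
            besselI μ (((a ^ 2 : ℝ) - (b ^ 2 : ℝ)) * v) =
            ∫ v in Set.Ioi (0:ℝ), ((v ^ 11 * Real.exp (-(A ^ 2 + B ^ 2) * v) : ℝ) : ℂ)
              * besselI μ ((A ^ 2 - B ^ 2) * v) := by
          congr 1
          ext v
          rw [mul_assoc (v ^ 11), ← Real.exp_add, ← Complex.ofReal_pow A, ← Complex.ofReal_pow B,
            hA, hB]
          congr 3
          · ring_nf
          · push_cast
            ring
        rw [h', h]
        have hG1 := Complex.Gamma_ne_zero_of_re_pos (s := μ + 12) (by simp; linarith)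
        have hG2 := Complex.Gamma_ne_zero_of_re_pos (s := μ + 1) (by simp; linarith)
        generalize ((A - B) / (A + B) : ℂ) ^ μ = p
        generalize (1 / A + 1 / B : ℂ) ^ 22 = r
        have hA1 : (A : ℂ) ≠ 0 := by exact_mod_cast hA0.ne'
        have hB1 : (B : ℂ) ≠ 0 := by exact_mod_cast hB0.ne'
        field_simp
      rw [tsum_congr e1, tsum_mul_left, tsum_congr e2, tsum_mul_left, hL, hR]
      have hG1 := Complex.Gamma_ne_zero_of_re_pos (s := μ + 12) (by simp; linarith)
      have hG2 := Complex.Gamma_ne_zero_of_re_pos (s := μ + 1) (by simp; linarith)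
      have e3 : ∫ v in Set.Ioi (0:ℝ), (∑' n : ℕ, τ (n + 1) *
          ((Real.exp (-((n + 1) * (π ^ 2 / (2 * v)))) / v : ℝ) : ℂ)) *
          ((Real.exp (-(a ^ 2 + b ^ 2) * v) : ℝ) *
            besselI μ (((a ^ 2 : ℝ) - (b ^ 2 : ℝ)) * v)) = (4 / π : ℂ) ^ 12 *
          ∫ v in Set.Ioi (0:ℝ), (∑' n : ℕ, τ (n + 1) *
          ((v ^ 11 * Real.exp (-(8 * (n + 1) * v)) : ℝ) : ℂ)) *
          ((Real.exp (-(a ^ 2 + b ^ 2) * v) : ℝ) *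
            besselI μ (((a ^ 2 : ℝ) - (b ^ 2 : ℝ)) * v)) := by
        rw [← MeasureTheory.integral_const_mul]
        refine MeasureTheory.setIntegral_congr_fun measurableSet_Ioi fun v hv => ?_
        rw [← mul_assoc ((4 / π : ℂ) ^ 12)]
        congr 1
        have hv0 : 0 < v := hv
        have hv1 : (v : ℂ) ≠ 0 := by exact_mod_cast hv0.ne'
        have h := hτ.tsum_exp_inv hv0
        have l1 : ∀ n : ℕ, τ (n + 1) *
          ((Real.exp (-((n + 1) * (π ^ 2 / (2 * v)))) / v : ℝ) : ℂ) = (v : ℂ)⁻¹ * (τ (n + 1) *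
            Complex.exp (-((n + 1 : ℝ) * (π ^ 2 / (2 * v)) : ℝ))) := by
          intro n
          push_cast
          ring
        have l2 : ∀ n : ℕ, τ (n + 1) *
          ((v ^ 11 * Real.exp (-(8 * (n + 1) * v)) : ℝ) : ℂ) = (v : ℂ) ^ 11 * (τ (n + 1) *
            Complex.exp (-(8 * (n + 1 : ℝ) * v : ℝ))) := by
          intro n
          push_cast
          ring
        rw [tsum_congr l1, tsum_congr l2, tsum_mul_left, tsum_mul_left, h]
        generalize (∑' n : ℕ, τ (n + 1) * Complex.exp (-(8 * (n + 1 : ℝ) * v : ℝ))) = S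
        push_cast
        field_simp
      rw [e3]
      generalize (∫ v in Set.Ioi (0:ℝ), (∑' n : ℕ, τ (n + 1) *
          ((v ^ 11 * Real.exp (-(8 * (n + 1) * v)) : ℝ) : ℂ)) *
          ((Real.exp (-(a ^ 2 + b ^ 2) * v) : ℝ) *
            besselI μ (((a ^ 2 : ℝ) - (b ^ 2 : ℝ)) * v))) = S
      have hpi : (π : ℂ) ≠ 0 := by exact_mod_cast Real.pi_ne_zero
      field_simp
      norm_num
    · intro n
      fun_prop
    · intro n v hv
      have hv0 : 0 < v := hv
      rw [abs_of_nonneg (by positivity)]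
      have h := Real.exp_neg_le_factorial_div_pow (show 0 < 8 * ((n : ℝ) + 1) * v by positivity) 8
      have h2 : ((8 : ℕ).factorial : ℝ) / (8 * ((n : ℝ) + 1) * v) ^ 8 ≤
          (8 : ℕ).factorial / (1 * ((n : ℝ) + 1) * v) ^ 8 := by
        gcongr
        norm_num
      calc _ ≤ v ^ 11 * ((8 : ℕ).factorial / (1 * ((n : ℝ) + 1) * v) ^ 8) := by
            gcongr
            exact h.trans h2
        _ = _ := by
          field_simp
  · intro n v hv
    have hv0 : v ≠ 0 := ne_of_gt hv
    have : ContinuousAt (fun v : ℝ => Real.exp (-((n + 1) * (π ^ 2 / (2 * v)))) / v) v := by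
      refine ContinuousAt.div ?_ continuousAt_id hv0
      refine Real.continuous_exp.continuousAt.comp ?_
      refine (continuousAt_const.mul (continuousAt_const.div (by fun_prop) ?_)).neg
      positivity
    exact this.continuousWithinAt
  · intro n v hv
    have hv0 : 0 < v := hv
    rw [abs_of_nonneg (by positivity)]
    have h := Real.exp_neg_le_factorial_div_pow
      (show 0 < ((n : ℝ) + 1) * (π ^ 2 / (2 * v)) by positivity) 8
    have hpi : (1 : ℝ) ≤ π ^ 2 := by nlinarith [Real.pi_gt_three]
    have h2 : ((8 : ℕ).factorial : ℝ) / (((n : ℝ) + 1) * (π ^ 2 / (2 * v))) ^ 8 ≤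
        (8 : ℕ).factorial / (((n : ℝ) + 1) * (1 / (2 * v))) ^ 8 := by
      gcongr
    calc _ ≤ ((8 : ℕ).factorial / (((n : ℝ) + 1) * (1 / (2 * v))) ^ 8) / v := by
          gcongr
          exact h.trans h2
      _ = _ := by
        field_simp
        ring

theorem csqrt_eq_cpow_inv_two (z : ℂ) : csqrt z = z ^ (2⁻¹ : ℂ) := by
  rw [csqrt, one_div]

theorem csqrt_sq (z : ℂ) : csqrt z ^ 2 = z := by
  rw [csqrt_eq_cpow_inv_two]
  exact Complex.cpow_ofNat_inv_pow z 2

theorem norm_csqrt_sq (z : ℂ) : ‖csqrt z‖ ^ 2 = ‖z‖ := by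
  rw [← norm_pow, csqrt_sq]

theorem csqrt_ofReal {x : ℝ} (hx : 0 ≤ x) : csqrt (x : ℂ) = (√x : ℝ) := by
  rw [csqrt, Real.sqrt_eq_rpow, Complex.ofReal_cpow hx]
  norm_num

theorem csqrt_re (z : ℂ) : (csqrt z).re = √((‖z‖ + z.re) / 2) := by
  rw [csqrt_eq_cpow_inv_two, Complex.cpow_inv_two_re]

theorem two_mul_re_sq (a : ℂ) : 2 * a.re ^ 2 = ‖a ^ 2‖ + (a ^ 2).re := by
  rw [norm_pow, Complex.sq_norm, Complex.normSq_apply, sq a, Complex.mul_re]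
  ring

theorem differentiableAt_csqrt {z : ℂ} (hz : z ∈ Complex.slitPlane) :
    DifferentiableAt ℂ csqrt z :=
  differentiableAt_id.cpow_const hz

theorem ofReal_add_sq_mem_slitPlane {X : ℝ} (hX : 0 ≤ X) {a : ℂ} (ha : 0 < a.re) :
    (X : ℂ) + a ^ 2 ∈ Complex.slitPlane := by
  rw [Complex.mem_slitPlane_iff]
  by_cases h : a.im = 0
  · left
    simp only [Complex.add_re, Complex.ofReal_re, sq, Complex.mul_re, h]
    nlinarith
  · right
    simp only [Complex.add_im, Complex.ofReal_im, sq, Complex.mul_im, zero_add]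
    intro h2
    have : a.re * a.im = 0 := by linarith
    exact (mul_ne_zero ha.ne' h) this

theorem re_le_re_csqrt {X : ℝ} (hX : 0 ≤ X) {a : ℂ} :
    a.re ≤ (csqrt (X + a ^ 2)).re := by
  rw [csqrt_re]
  apply Real.le_sqrt_of_sq_le
  have h := two_mul_re_sq a
  have h2 : ‖a ^ 2‖ ≤ ‖(X : ℂ) + a ^ 2‖ + X := by
    have := norm_sub_le ((X : ℂ) + a ^ 2) X
    rwa [add_sub_cancel_left, Complex.norm_real, Real.norm_of_nonneg hX] at this
  rw [Complex.add_re, Complex.ofReal_re]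
  linarith

theorem div_mem_slitPlane_of_re_lt {X : ℝ} (hX : 0 ≤ X) {a b : ℂ} (hb : 0 < b.re)
    (hab : b.re < a.re) :
    (csqrt (X + a ^ 2) - csqrt (X + b ^ 2)) / (csqrt (X + a ^ 2) + csqrt (X + b ^ 2)) ∈
      Complex.slitPlane := by
  have hA := csqrt_sq (X + a ^ 2)
  have hB := csqrt_sq (X + b ^ 2)
  have hA0 : 0 < (csqrt (X + a ^ 2)).re := (hb.trans hab).trans_le (re_le_re_csqrt hX)
  have hB0 : 0 < (csqrt (X + b ^ 2)).re := hb.trans_le (re_le_re_csqrt hX)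
  generalize csqrt (X + a ^ 2) = A at *
  generalize csqrt (X + b ^ 2) = B at *
  have hAB : A + B ≠ 0 := by
    intro h
    have := congrArg Complex.re h
    simp at this
    linarith
  by_contra h
  rw [Complex.mem_slitPlane_iff, not_or, not_not, not_lt] at h
  obtain ⟨t, ht, hw⟩ : ∃ t : ℝ, 0 ≤ t ∧ (A - B) / (A + B) = (-t : ℝ) :=
    ⟨-((A - B) / (A + B)).re, by linarith [h.1], by
      apply Complex.ext
      · simp
      · simpa using h.2⟩
  rw [div_eq_iff hAB] at hw
  have h1 : ((1 + t : ℝ) : ℂ) * A = ((1 - t : ℝ) : ℂ) * B := by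
    push_cast at hw ⊢
    linear_combination hw
  have h2 := congrArg Complex.re h1
  rw [Complex.re_ofReal_mul, Complex.re_ofReal_mul] at h2
  have ht1 : 0 < 1 - t := by
    by_contra h'
    nlinarith [mul_pos (show 0 < 1 + t by linarith) hA0]
  have h3 : ((1 + t : ℝ) : ℂ) ^ 2 * a ^ 2 = ((1 - t : ℝ) : ℂ) ^ 2 * b ^ 2 - (4 * t * X : ℝ) := by
    have h4 : ((1 + t : ℝ) : ℂ) ^ 2 * (X + a ^ 2) = ((1 - t : ℝ) : ℂ) ^ 2 * (X + b ^ 2) := by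
      rw [← hA, ← hB, ← mul_pow, ← mul_pow, h1]
    push_cast at h4 ⊢
    linear_combination h4
  have ha := two_mul_re_sq (((1 + t : ℝ) : ℂ) * a)
  have hb' := two_mul_re_sq (((1 - t : ℝ) : ℂ) * b)
  rw [mul_pow, h3] at ha
  rw [mul_pow] at hb'
  have h5 := norm_sub_le (((1 - t : ℝ) : ℂ) ^ 2 * b ^ 2) (4 * t * X : ℝ)
  rw [Complex.norm_real, Real.norm_of_nonneg (by positivity)] at h5
  rw [Complex.sub_re, Complex.ofReal_re] at ha
  have h6 : (((1 + t : ℝ) : ℂ) * a).re ^ 2 ≤ (((1 - t : ℝ) : ℂ) * b).re ^ 2 := by linarith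
  rw [Complex.re_ofReal_mul, Complex.re_ofReal_mul] at h6
  have h7 := (pow_le_pow_iff_left₀ (by nlinarith) (by nlinarith) two_ne_zero).1 h6
  nlinarith

theorem mul_le_norm_ofReal_add_sq {X R δ : ℝ} (hX : 0 ≤ X) (hδ : 0 < δ) {a : ℂ} (ha : δ ≤ a.re)
    (haR : ‖a‖ ≤ R) : δ ^ 2 / (R ^ 2 + δ ^ 2) * X ≤ ‖(X : ℂ) + a ^ 2‖ := by
  have h1 : X - R ^ 2 ≤ ‖(X : ℂ) + a ^ 2‖ := by
    have := norm_sub_le ((X : ℂ) + a ^ 2) (a ^ 2)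
    rw [add_sub_cancel_right, Complex.norm_real, Real.norm_of_nonneg hX, norm_pow] at this
    have : ‖a‖ ^ 2 ≤ R ^ 2 := by gcongr
    linarith
  have h2 : δ ^ 2 ≤ ‖(X : ℂ) + a ^ 2‖ := by
    have h3 := two_mul_re_sq (csqrt (X + a ^ 2))
    rw [csqrt_sq] at h3
    have h4 := re_le_re_csqrt hX (a := a)
    have h5 : δ ^ 2 ≤ (csqrt (X + a ^ 2)).re ^ 2 := by
      apply pow_le_pow_left₀ hδ.le
      linarith
    have := Complex.re_le_norm ((X : ℂ) + a ^ 2)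
    linarith
  rw [div_mul_eq_mul_div, div_le_iff₀ (by positivity)]
  have hn := norm_nonneg ((X : ℂ) + a ^ 2)
  by_cases h : X ≤ R ^ 2 + δ ^ 2
  · calc δ ^ 2 * X ≤ δ ^ 2 * (R ^ 2 + δ ^ 2) := by gcongr
      _ ≤ _ := by gcongr
  · push Not at h
    have : (X - R ^ 2) * (R ^ 2 + δ ^ 2) ≤ ‖(X : ℂ) + a ^ 2‖ * (R ^ 2 + δ ^ 2) := by gcongr
    nlinarith [sq_nonneg R]

theorem hyp2F1_neg_natCast (k : ℕ) (a c z : ℂ) : hyp2F1 a (-k) c z =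
    ∑ m ∈ Finset.range (k + 1), ((ascPochhammer ℂ m).eval a * (ascPochhammer ℂ m).eval (-k : ℂ)) /
      ((ascPochhammer ℂ m).eval c * (m.factorial : ℂ)) * z ^ m := by
  rw [hyp2F1]
  apply tsum_eq_sum
  intro m hm
  rw [Finset.mem_range, not_lt] at hm
  have : (ascPochhammer ℂ m).eval (-k : ℂ) = 0 := by
    rw [ascPochhammer_eval_neg_eq_descPochhammer, descPochhammer_eval_coe_nat_of_lt (by lia), mul_zero]
  rw [this]
  simp

theorem differentiable_hyp2F1_neg_natCast (k : ℕ) (a c : ℂ) :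
    Differentiable ℂ (hyp2F1 a (-k) c) := by
  rw [funext (hyp2F1_neg_natCast k a c)]
  fun_prop

theorem exists_norm_hyp2F1_neg_natCast_le (k : ℕ) (a c : ℂ) (r : ℝ) :
    ∃ C : ℝ, 0 ≤ C ∧ ∀ z : ℂ, ‖z‖ ≤ r → ‖hyp2F1 a (-k) c z‖ ≤ C := by
  obtain ⟨C, hC⟩ := (isCompact_closedBall (0:ℂ) r).exists_bound_of_continuousOn
    (differentiable_hyp2F1_neg_natCast k a c).continuous.continuousOn
  exact ⟨max C 0, le_max_right _ _, fun z hz => (hC z (by simpa using hz)).trans (le_max_left _ _)⟩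

noncomputable def besselProductTerm (μ : ℂ) (n : ℕ) (a b : ℂ) : ℂ :=
  besselI μ ((π * √(n + 1) : ℝ) * (a - b)) * besselK μ ((π * √(n + 1) : ℝ) * (a + b))

noncomputable def hypergeometricTerm (μ : ℂ) (n : ℕ) (a b : ℂ) : ℂ :=
  1 / (csqrt ((4 * (n + 1) : ℝ) + a ^ 2) * csqrt ((4 * (n + 1) : ℝ) + b ^ 2)) *
  ((csqrt ((4 * (n + 1) : ℝ) + a ^ 2) - csqrt ((4 * (n + 1) : ℝ) + b ^ 2)) /
    (csqrt ((4 * (n + 1) : ℝ) + a ^ 2) + csqrt ((4 * (n + 1) : ℝ) + b ^ 2))) ^ μ *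
  (1 / csqrt ((4 * (n + 1) : ℝ) + a ^ 2) + 1 / csqrt ((4 * (n + 1) : ℝ) + b ^ 2)) ^ 22 *
  hyp2F1 (μ - 11) (-(11 : ℕ)) (μ + 1)
    (((csqrt ((4 * (n + 1) : ℝ) + a ^ 2) - csqrt ((4 * (n + 1) : ℝ) + b ^ 2)) /
      (csqrt ((4 * (n + 1) : ℝ) + a ^ 2) + csqrt ((4 * (n + 1) : ℝ) + b ^ 2))) ^ 2)

theorem differentiableAt_besselProductTerm {μ : ℂ} (hμ : 0 < μ.re) (n : ℕ) {f g : ℂ → ℂ} {z : ℂ}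
    (hf : DifferentiableAt ℂ f z) (hg : DifferentiableAt ℂ g z) (h0 : 0 < (g z).re)
    (h : (g z).re < (f z).re) :
    DifferentiableAt ℂ (fun z => besselProductTerm μ n (f z) (g z)) z := by
  have hs : 0 < π * √((n : ℝ) + 1) := by positivity
  refine DifferentiableAt.mul ?_ ?_
  · refine (differentiableAt_besselI hμ ?_).comp (f := fun z => _ * (f z - g z)) z
      ((hf.sub hg).const_mul _)
    rw [Complex.re_ofReal_mul, Complex.sub_re]
    exact mul_pos hs (by linarith)
  · refine (differentiableAt_besselK μ ?_).comp (f := fun z => _ * (f z + g z)) z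
      ((hf.add hg).const_mul _)
    rw [Complex.re_ofReal_mul, Complex.add_re]
    exact mul_pos hs (by linarith)

theorem differentiableAt_csqrt_add_sq {X : ℝ} (hX : 0 ≤ X) {f : ℂ → ℂ} {z : ℂ}
    (hf : DifferentiableAt ℂ f z) (h0 : 0 < (f z).re) :
    DifferentiableAt ℂ (fun z => csqrt (X + f z ^ 2)) z :=
  (differentiableAt_csqrt (ofReal_add_sq_mem_slitPlane hX h0)).comp (f := fun z => X + f z ^ 2) z
    ((hf.pow 2).const_add _)

theorem differentiableAt_hypergeometricTerm (μ : ℂ) (n : ℕ) {f g : ℂ → ℂ} {z : ℂ}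
    (hf : DifferentiableAt ℂ f z) (hg : DifferentiableAt ℂ g z) (h0 : 0 < (g z).re)
    (h : (g z).re < (f z).re) :
    DifferentiableAt ℂ (fun z => hypergeometricTerm μ n (f z) (g z)) z := by
  have hX : (0 : ℝ) ≤ 4 * (n + 1) := by positivity
  have hA := differentiableAt_csqrt_add_sq hX hf (h0.trans h)
  have hB := differentiableAt_csqrt_add_sq hX hg h0
  have hA0 := (h0.trans h).trans_le (re_le_re_csqrt hX)
  have hB0 := h0.trans_le (re_le_re_csqrt hX)
  have hAB := Complex.ne_zero_of_re_pos
    (show 0 < (csqrt ((4 * (n + 1) : ℝ) + f z ^ 2) + csqrt ((4 * (n + 1) : ℝ) + g z ^ 2)).re by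
      rw [Complex.add_re]; positivity)
  have hA1 := Complex.ne_zero_of_re_pos hA0
  have hB1 := Complex.ne_zero_of_re_pos hB0
  have hw := (hA.sub hB).div (hA.add hB) hAB
  unfold hypergeometricTerm
  refine DifferentiableAt.mul (DifferentiableAt.mul (DifferentiableAt.mul ?_ ?_) ?_) ?_
  · exact (differentiableAt_const _).div (hA.mul hB) (mul_ne_zero hA1 hB1)
  · exact hw.cpow_const (div_mem_slitPlane_of_re_lt hX h0 h)
  · exact (((differentiableAt_const _).div hA hA1).add ((differentiableAt_const _).div hB hB1)).pow _
  · exact (differentiable_hyp2F1_neg_natCast 11 _ _ _).comp z (hw.pow 2)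

theorem exists_norm_besselProductTerm_le {μ : ℂ} (hμ : 0 < μ.re) (R : ℝ) {δ : ℝ} (hδ : 0 < δ) :
    ∃ C : ℝ, 0 ≤ C ∧ ∀ (n : ℕ) (a b : ℂ), ‖a‖ ≤ R → ‖b‖ ≤ R → δ ≤ b.re → b.re < a.re →
      ‖besselProductTerm μ n a b‖ ≤ C / ((n : ℝ) + 1) ^ 8 := by
  obtain ⟨C₁, hC₁, hI⟩ := exists_norm_besselI_le hμ
  obtain ⟨C₂, hC₂, hK⟩ := exists_norm_besselK_le μ hδ
  obtain ⟨k, hk⟩ := exists_nat_ge μ.re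
  refine ⟨C₁ * C₂ * (1 + |2 * R|) ^ k * ((k + 16).factorial / (2 * δ) ^ (k + 16)), by positivity,
    fun n a b ha hb hbδ hab => ?_⟩
  have hn : (1 : ℝ) ≤ √((n : ℝ) + 1) := by
    rw [Real.one_le_sqrt]
    linarith [(Nat.cast_nonneg n : (0:ℝ) ≤ n)]
  have hs : 1 ≤ π * √((n : ℝ) + 1) := by nlinarith [Real.pi_gt_three]
  have hs2 : (n : ℝ) + 1 ≤ (π * √((n : ℝ) + 1)) ^ 2 := by
    rw [mul_pow, Real.sq_sqrt (by positivity)]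
    have : (1 : ℝ) ≤ π ^ 2 := by nlinarith [Real.pi_gt_three]
    nlinarith [(Nat.cast_nonneg n : (0:ℝ) ≤ n)]
  unfold besselProductTerm
  generalize π * √((n : ℝ) + 1) = s at *
  have hs0 : 0 < s := by linarith
  have hI' := hI (s * (a - b)) (by
    rw [Complex.re_ofReal_mul, Complex.sub_re]
    exact mul_pos hs0 (by linarith))
  have hK' := hK (s * (a + b)) (by
    rw [Complex.re_ofReal_mul, Complex.add_re]
    nlinarith)
  rw [Complex.re_ofReal_mul, Complex.sub_re, norm_mul, Complex.norm_real,
    Real.norm_of_nonneg hs0.le] at hI'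
  rw [Complex.re_ofReal_mul, Complex.add_re] at hK'
  have h1 : ‖a - b‖ ≤ 1 + |2 * R| := by
    have := norm_sub_le a b
    have := le_abs_self (2 * R)
    linarith
  have h2 : (s * ‖a - b‖) ^ μ.re ≤ (1 + |2 * R|) ^ k * s ^ k := by
    calc _ ≤ (s * (1 + |2 * R|)) ^ μ.re := by gcongr
      _ ≤ (s * (1 + |2 * R|)) ^ (k : ℝ) := by
        apply Real.rpow_le_rpow_of_exponent_le _ hk
        nlinarith [abs_nonneg (2 * R)]
      _ = _ := by rw [Real.rpow_natCast, mul_pow, mul_comm]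
  have h3 : Real.exp (s * (a.re - b.re)) * Real.exp (-(s * (a.re + b.re))) ≤
      (k + 16).factorial / (2 * δ) ^ (k + 16) / s ^ (k + 16) := by
    rw [← Real.exp_add]
    calc _ ≤ Real.exp (-(2 * δ * s)) := by
          apply Real.exp_le_exp.2
          nlinarith
      _ ≤ _ := Real.exp_neg_le_factorial_div_pow (by positivity) (k + 16)
      _ = _ := by rw [mul_pow, div_div]
  rw [norm_mul]
  calc _ ≤ (C₁ * (s * ‖a - b‖) ^ μ.re * Real.exp (s * (a.re - b.re))) *
        (C₂ * Real.exp (-(s * (a.re + b.re)))) := by gcongr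
    _ = C₁ * C₂ * (s * ‖a - b‖) ^ μ.re *
        (Real.exp (s * (a.re - b.re)) * Real.exp (-(s * (a.re + b.re)))) := by ring
    _ ≤ C₁ * C₂ * ((1 + |2 * R|) ^ k * s ^ k) *
        ((k + 16).factorial / (2 * δ) ^ (k + 16) / s ^ (k + 16)) := by gcongr
    _ = C₁ * C₂ * (1 + |2 * R|) ^ k * ((k + 16).factorial / (2 * δ) ^ (k + 16)) / (s ^ 2) ^ 8 := by
      field_simp
      ring
    _ ≤ _ := by gcongr

theorem exists_norm_hypergeometricTerm_le {μ : ℂ} (hμ : 0 < μ.re) {R δ : ℝ} (hδ : 0 < δ) :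
    ∃ C : ℝ, 0 ≤ C ∧ ∀ (n : ℕ) (a b : ℂ), ‖a‖ ≤ R → ‖b‖ ≤ R → δ ≤ b.re → b.re < a.re →
      ‖hypergeometricTerm μ n a b‖ ≤ C / ((n : ℝ) + 1) ^ 8 := by
  obtain ⟨K, hK, hF⟩ := exists_norm_hyp2F1_neg_natCast_le 11 (μ - 11) (μ + 1)
    ((2 * R ^ 2 / (2 * δ) ^ 2) ^ 2)
  set c := δ ^ 2 / (R ^ 2 + δ ^ 2) with hc
  have hc0 : 0 < c := by positivity
  refine ⟨(1 / c) * (Real.exp (π * |μ.im|) * (2 * R ^ 2 / (2 * δ) ^ 2) ^ μ.re) * (4 / c) ^ 11 * K,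
    by positivity, fun n a b ha hb hbδ hab => ?_⟩
  have hX : (0 : ℝ) ≤ 4 * (n + 1) := by positivity
  have hN : (0 : ℝ) < n + 1 := by positivity
  have hN1 : (1 : ℝ) ≤ n + 1 := by linarith [(Nat.cast_nonneg n : (0:ℝ) ≤ n)]
  have hw := div_mem_slitPlane_of_re_lt hX (hδ.trans_le hbδ) hab
  have hA0 := (hbδ.trans hab.le).trans (re_le_re_csqrt hX)
  have hB0 := hbδ.trans (re_le_re_csqrt hX)
  have hA1 := mul_le_norm_ofReal_add_sq hX hδ (hbδ.trans hab.le) ha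
  have hB1 := mul_le_norm_ofReal_add_sq hX hδ hbδ hb
  rw [← norm_csqrt_sq, ← hc] at hA1 hB1
  have hAB := congrArg₂ (· - ·) (csqrt_sq ((4 * (n + 1) : ℝ) + a ^ 2))
    (csqrt_sq ((4 * (n + 1) : ℝ) + b ^ 2))
  simp only [add_sub_add_left_eq_sub] at hAB
  unfold hypergeometricTerm
  generalize csqrt ((4 * (n + 1) : ℝ) + a ^ 2) = A at *
  generalize csqrt ((4 * (n + 1) : ℝ) + b ^ 2) = B at *
  have hA2 : 0 < ‖A‖ := norm_pos_iff.2 (Complex.ne_zero_of_re_pos (by linarith))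
  have hB2 : 0 < ‖B‖ := norm_pos_iff.2 (Complex.ne_zero_of_re_pos (by linarith))
  have hS : 2 * δ ≤ ‖A + B‖ := by
    have := Complex.re_le_norm (A + B)
    rw [Complex.add_re] at this
    linarith
  have hS0 : A + B ≠ 0 := norm_pos_iff.1 (by linarith)
  have hwle : ‖(A - B) / (A + B)‖ ≤ 2 * R ^ 2 / (2 * δ) ^ 2 := by
    have e : (A - B) / (A + B) = (a ^ 2 - b ^ 2) / (A + B) ^ 2 := by
      rw [← hAB]
      field_simp
      ring
    rw [e, norm_div, norm_pow]
    have : ‖a ^ 2 - b ^ 2‖ ≤ 2 * R ^ 2 := by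
      have h1 := norm_sub_le (a ^ 2) (b ^ 2)
      rw [norm_pow, norm_pow] at h1
      have h2 : ‖a‖ ^ 2 ≤ R ^ 2 := by gcongr
      have h3 : ‖b‖ ^ 2 ≤ R ^ 2 := by gcongr
      linarith
    gcongr
  have hp : ‖((A - B) / (A + B)) ^ μ‖ ≤
      Real.exp (π * |μ.im|) * (2 * R ^ 2 / (2 * δ) ^ 2) ^ μ.re := by
    refine (Complex.norm_cpow_le_of_ne_zero (Complex.slitPlane_ne_zero hw) μ).trans ?_
    gcongr
  have hF' := hF (((A - B) / (A + B)) ^ 2) (by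
    rw [norm_pow]
    gcongr)
  have hiA : 1 / ‖A‖ ^ 2 ≤ 1 / (c * (n + 1)) := by
    apply one_div_le_one_div_of_le (by positivity)
    nlinarith [mul_pos hc0 hN]
  have hiB : 1 / ‖B‖ ^ 2 ≤ 1 / (c * (n + 1)) := by
    apply one_div_le_one_div_of_le (by positivity)
    nlinarith [mul_pos hc0 hN]
  have hprod : ‖1 / (A * B)‖ ≤ 1 / (c * (n + 1)) := by
    rw [norm_div, norm_one, norm_mul]
    have e : 1 / (‖A‖ * ‖B‖) = (1 / ‖A‖) * (1 / ‖B‖) := by field_simp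
    have e1 : 1 / ‖A‖ ^ 2 = (1 / ‖A‖) ^ 2 := by field_simp
    have e2 : 1 / ‖B‖ ^ 2 = (1 / ‖B‖) ^ 2 := by field_simp
    rw [e]
    rw [e1] at hiA
    rw [e2] at hiB
    nlinarith [sq_nonneg (1 / ‖A‖ - 1 / ‖B‖)]
  have hsum : ‖1 / A + 1 / B‖ ^ 2 ≤ 4 / c / (n + 1) := by
    have h1 := norm_add_le (1 / A) (1 / B)
    rw [norm_div, norm_div, norm_one] at h1
    have h2 : ‖1 / A + 1 / B‖ ^ 2 ≤ (1 / ‖A‖ + 1 / ‖B‖) ^ 2 := by gcongr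
    have e1 : 1 / ‖A‖ ^ 2 = (1 / ‖A‖) ^ 2 := by field_simp
    have e2 : 1 / ‖B‖ ^ 2 = (1 / ‖B‖) ^ 2 := by field_simp
    rw [e1] at hiA
    rw [e2] at hiB
    have e3 : 4 / c / ((n : ℝ) + 1) = 4 * (1 / (c * (n + 1))) := by field_simp
    rw [e3]
    nlinarith [sq_nonneg (1 / ‖A‖ - 1 / ‖B‖)]
  rw [norm_mul, norm_mul, norm_mul, norm_pow, show ‖1 / A + 1 / B‖ ^ 22 =
    (‖1 / A + 1 / B‖ ^ 2) ^ 11 by rw [← pow_mul]]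
  calc _ ≤ 1 / (c * (n + 1)) * (Real.exp (π * |μ.im|) * (2 * R ^ 2 / (2 * δ) ^ 2) ^ μ.re) *
        (4 / c / (n + 1)) ^ 11 * K := by gcongr
    _ = (1 / c) * (Real.exp (π * |μ.im|) * (2 * R ^ 2 / (2 * δ) ^ 2) ^ μ.re) * (4 / c) ^ 11 * K /
        ((n : ℝ) + 1) ^ 12 := by
      field_simp
    _ ≤ _ := by
      gcongr
      norm_num

theorem differentiableOn_tsum_mul_comp {τ : ℕ → ℂ} (hτ : IsRamanujanTau τ)
    {T : ℕ → ℂ → ℂ → ℂ}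
    (hT : ∀ n (f g : ℂ → ℂ) (z : ℂ), DifferentiableAt ℂ f z → DifferentiableAt ℂ g z →
      0 < (g z).re → (g z).re < (f z).re → DifferentiableAt ℂ (fun z => T n (f z) (g z)) z)
    (hTb : ∀ R δ : ℝ, 0 < δ → ∃ C : ℝ, 0 ≤ C ∧ ∀ (n : ℕ) (a b : ℂ), ‖a‖ ≤ R → ‖b‖ ≤ R → δ ≤ b.re →
      b.re < a.re → ‖T n a b‖ ≤ C / ((n : ℝ) + 1) ^ 8)
    {f g : ℂ → ℂ} (hf : Differentiable ℂ f) (hg : Differentiable ℂ g) :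
    DifferentiableOn ℂ (fun z => ∑' n, τ (n + 1) * T n (f z) (g z))
      {z | 0 < (g z).re ∧ (g z).re < (f z).re} := by
  rintro z ⟨hz0, hz⟩
  obtain ⟨C, hC, hCτ⟩ := hτ.exists_norm_le
  obtain ⟨D, hD, hDT⟩ := hTb (‖f z‖ + ‖g z‖ + 1) ((g z).re / 2) (by linarith)
  have hfc := hf.continuous
  have hgc := hg.continuous
  set V : Set ℂ := {w | ‖f w‖ < ‖f z‖ + ‖g z‖ + 1} ∩ {w | ‖g w‖ < ‖f z‖ + ‖g z‖ + 1} ∩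
    {w | (g z).re / 2 < (g w).re} ∩ {w | (g w).re < (f w).re} with hV
  have hVo : IsOpen V := by
    refine ((IsOpen.inter ?_ ?_).inter ?_).inter ?_
    · exact isOpen_lt hfc.norm continuous_const
    · exact isOpen_lt hgc.norm continuous_const
    · exact isOpen_lt continuous_const (Complex.continuous_re.comp hgc)
    · exact isOpen_lt (Complex.continuous_re.comp hgc) (Complex.continuous_re.comp hfc)
  have hzV : z ∈ V := by
    refine ⟨⟨⟨?_, ?_⟩, ?_⟩, hz⟩
    · show ‖f z‖ < _
      linarith [norm_nonneg (g z)]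
    · show ‖g z‖ < _
      linarith [norm_nonneg (f z)]
    · show (g z).re / 2 < (g z).re
      linarith
  have hc : Summable (fun n : ℕ => C * D * (1 / ((n:ℝ) + 1) ^ 2)) := by
    have := (summable_nat_add_iff 1).2 (Real.summable_one_div_nat_pow.2 (one_lt_two))
    simp only [Nat.cast_add, Nat.cast_one] at this
    exact this.mul_left _
  have key := Complex.differentiableOn_tsum_of_summable_norm
    (F := fun n z => τ (n + 1) * T n (f z) (g z)) hc ?_ hVo ?_
  · exact (key.differentiableAt (hVo.mem_nhds hzV)).differentiableWithinAt
  · rintro n w ⟨⟨⟨-, -⟩, h3⟩, h4⟩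
    have h3 : (g z).re / 2 < (g w).re := h3
    exact ((hT n f g w hf.differentiableAt hg.differentiableAt (by linarith) h4).const_mul
      _).differentiableWithinAt
  · rintro n w ⟨⟨⟨h1, h2⟩, h3⟩, h4⟩
    rw [norm_mul]
    calc _ ≤ C * ((n:ℝ) + 1) ^ 6 * (D / ((n : ℝ) + 1) ^ 8) :=
          mul_le_mul (hCτ n) (hDT n _ _ (le_of_lt h1) (le_of_lt h2) (le_of_lt h3) h4)
            (norm_nonneg _) (by positivity)
      _ = _ := by field_simp

theorem Complex.eqOn_of_eventually_ofReal_eq {F G : ℂ → ℂ} {U : Set ℂ} (hU : IsOpen U)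
    (hUc : Convex ℝ U) (hF : DifferentiableOn ℂ F U) (hG : DifferentiableOn ℂ G U) {x : ℝ}
    (hx : (x : ℂ) ∈ U) (h : ∀ᶠ y : ℝ in nhds x, F y = G y) : Set.EqOn F G U := by
  refine (hF.analyticOnNhd hU).eqOn_of_preconnected_of_frequently_eq (hG.analyticOnNhd hU)
    hUc.isPreconnected hx ?_
  have h2 : ∃ᶠ y : ℝ in nhdsWithin x {x}ᶜ, F y = G y := (h.filter_mono nhdsWithin_le_nhds).frequently
  refine Filter.Tendsto.frequently (f := fun y : ℝ => (y : ℂ)) ?_ h2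
  refine tendsto_nhdsWithin_iff.2 ⟨Complex.continuous_ofReal.continuousAt.mono_left
    nhdsWithin_le_nhds, ?_⟩
  filter_upwards [self_mem_nhdsWithin] with y hy
  simpa using hy

theorem tsum_besselProductTerm_eq {τ : ℕ → ℂ} (hτ : IsRamanujanTau τ) {μ : ℂ} (hμ : 0 < μ.re)
    {a b : ℂ} (hb : 0 < b.re) (hab : b.re < a.re) :
    ∑' n : ℕ, τ (n + 1) * besselProductTerm μ n a b =
      2 / (2 * (π : ℂ)) ^ 12 * (Complex.Gamma (μ + 12) / Complex.Gamma (μ + 1)) *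
        ∑' n : ℕ, τ (n + 1) * hypergeometricTerm μ n a b := by
  have hL : ∀ {f g : ℂ → ℂ}, Differentiable ℂ f → Differentiable ℂ g →
      DifferentiableOn ℂ (fun z => ∑' n : ℕ, τ (n + 1) * besselProductTerm μ n (f z) (g z))
      {z | 0 < (g z).re ∧ (g z).re < (f z).re} := fun hf hg =>
    differentiableOn_tsum_mul_comp hτ
      (fun n f g z hf hg => differentiableAt_besselProductTerm hμ n hf hg)
      (fun R δ hδ => exists_norm_besselProductTerm_le hμ R hδ) hf hg
  have hR : ∀ {f g : ℂ → ℂ}, Differentiable ℂ f → Differentiable ℂ g →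
      DifferentiableOn ℂ (fun z => 2 / (2 * (π : ℂ)) ^ 12 *
        (Complex.Gamma (μ + 12) / Complex.Gamma (μ + 1)) *
        ∑' n : ℕ, τ (n + 1) * hypergeometricTerm μ n (f z) (g z))
      {z | 0 < (g z).re ∧ (g z).re < (f z).re} := fun hf hg =>
    (differentiableOn_tsum_mul_comp hτ
      (fun n f g z hf hg => differentiableAt_hypergeometricTerm μ n hf hg)
      (fun R δ hδ => exists_norm_hypergeometricTerm_le hμ hδ) hf hg).const_mul _
  have hreal : ∀ x y : ℝ, 0 < y → y < x → x < 6 / 5 * y →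
      ∑' n : ℕ, τ (n + 1) * besselProductTerm μ n x y =
      2 / (2 * (π : ℂ)) ^ 12 * (Complex.Gamma (μ + 12) / Complex.Gamma (μ + 1)) *
        ∑' n : ℕ, τ (n + 1) * hypergeometricTerm μ n x y := by
    intro x y hy hxy hxy2
    have e : ∀ (n : ℕ) (t : ℝ), csqrt ((4 * (n + 1) : ℝ) + (t : ℂ) ^ 2) =
        (√(4 * (n + 1) + t ^ 2) : ℝ) := by
      intro n t
      rw [← csqrt_ofReal (by positivity)]
      push_cast
      rfl
    have h := tsum_besselI_mul_besselK_ofReal hτ hμ hy hxy hxy2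
    simp only [besselProductTerm, hypergeometricTerm, e]
    convert! h using 8
  have h1 : ∀ y : ℝ, 0 < y → ∀ a : ℂ, y < a.re →
      ∑' n : ℕ, τ (n + 1) * besselProductTerm μ n a y =
      2 / (2 * (π : ℂ)) ^ 12 * (Complex.Gamma (μ + 12) / Complex.Gamma (μ + 1)) *
        ∑' n : ℕ, τ (n + 1) * hypergeometricTerm μ n a y := by
    intro y hy a ha
    refine Complex.eqOn_of_eventually_ofReal_eq (U := {z : ℂ | 0 < (y : ℂ).re ∧ (y : ℂ).re < z.re})
      (x := 11 / 10 * y) ?_ ?_ (hL differentiable_id (differentiable_const _))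
      (hR differentiable_id (differentiable_const _)) ?_ ?_ ⟨by simpa using hy, by simpa using ha⟩
    · exact (isOpen_const).inter (isOpen_lt continuous_const Complex.continuous_re)
    · intro u hu v hv s t hs ht hst
      exact ⟨hu.1, convex_halfSpace_re_gt _ hu.2 hv.2 hs ht hst⟩
    · refine ⟨by simpa using hy, ?_⟩
      rw [Complex.ofReal_re, Complex.ofReal_re]
      linarith
    · filter_upwards [Ioo_mem_nhds (show y < 11 / 10 * y by linarith)
        (show 11 / 10 * y < 6 / 5 * y by linarith)] with x hx
      exact hreal x y hy hx.1 hx.2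
  refine Complex.eqOn_of_eventually_ofReal_eq (U := {z : ℂ | 0 < z.re ∧ z.re < a.re})
    (F := fun z => ∑' n : ℕ, τ (n + 1) * besselProductTerm μ n a z)
    (G := fun z => 2 / (2 * (π : ℂ)) ^ 12 * (Complex.Gamma (μ + 12) / Complex.Gamma (μ + 1)) *
      ∑' n : ℕ, τ (n + 1) * hypergeometricTerm μ n a z)
    (x := b.re) ?_ ?_ (hL (differentiable_const _) differentiable_id)
    (hR (differentiable_const _) differentiable_id) ?_ ?_ ⟨hb, hab⟩
  · exact (isOpen_lt continuous_const Complex.continuous_re).inter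
      (isOpen_lt Complex.continuous_re continuous_const)
  · exact (convex_halfSpace_re_gt _).inter (convex_halfSpace_re_lt _)
  · exact ⟨by simpa using hb, by simpa using hab⟩
  · filter_upwards [Ioo_mem_nhds hb hab] with x hx
    exact h1 x hx.1 a hx.2

theorem stmt7 (τ : ℕ → ℂ) (hτ : IsRamanujanTau τ) (ν α β : ℂ) (hν : -1 < ν.re)
    (hαβ : (csqrt β).re < (csqrt α).re) (hβ : 0 < (csqrt β).re) :
    ∑' n : ℕ, τ (n + 1) *
        besselI (ν + 1) ((π : ℂ) * csqrt ((n : ℂ) + 1) * (csqrt α - csqrt β)) *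
        besselK (ν + 1) ((π : ℂ) * csqrt ((n : ℂ) + 1) * (csqrt α + csqrt β))
      = 2 / (2 * (π : ℂ)) ^ 12 * Complex.Gamma (ν + 13) / Complex.Gamma (ν + 2) *
        ∑' n : ℕ, τ (n + 1) /
            (csqrt (4 * ((n : ℂ) + 1) + α) * csqrt (4 * ((n : ℂ) + 1) + β)) *
          ((csqrt (4 * ((n : ℂ) + 1) + α) - csqrt (4 * ((n : ℂ) + 1) + β)) /
            (csqrt (4 * ((n : ℂ) + 1) + α) + csqrt (4 * ((n : ℂ) + 1) + β))) ^ (ν + 1) *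
          (1 / csqrt (4 * ((n : ℂ) + 1) + α) + 1 / csqrt (4 * ((n : ℂ) + 1) + β)) ^ 22 *
          hyp2F1 (ν - 10) (-11) (ν + 2)
            (((csqrt (4 * ((n : ℂ) + 1) + α) - csqrt (4 * ((n : ℂ) + 1) + β)) /
              (csqrt (4 * ((n : ℂ) + 1) + α) + csqrt (4 * ((n : ℂ) + 1) + β))) ^ 2) := by
  have h := tsum_besselProductTerm_eq hτ (μ := ν + 1) (by simp; linarith) hβ hαβ
  simp only [besselProductTerm, hypergeometricTerm, csqrt_sq] at h
  rw [show ν + 13 = ν + 1 + 12 by ring, show ν + 2 = ν + 1 + 1 by ring,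
    show ν - 10 = ν + 1 - 11 by ring, mul_div_assoc]
  convert! h using 3
  · rename_i n
    have e : csqrt ((n : ℂ) + 1) = (√((n : ℝ) + 1) : ℝ) := by
      rw [← csqrt_ofReal (by positivity)]
      push_cast
      rfl
    rw [e]
    push_cast
    ring
  · ext n
    rw [show ((4 * ((n : ℝ) + 1) : ℝ) : ℂ) = 4 * ((n : ℂ) + 1) by push_cast; rfl,
      Nat.cast_ofNat, div_eq_mul_one_div (τ _)]
    simp only [mul_assoc]
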